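/- arXiv:2003.10139 — 3 statements merged into one kernel-verified Lean document; each statement's English description precedes it below -/
import Mathlib

section
/- Let M be a matching of a graph G of size m ≥ 2 that is also a strong clique of G, and let x ∈ V(M). If M is not x-special and x has a neighbor in V(M) \ {x, x'}, then for every ℓ ∈ {1,…,m−1} there exists an (x,M)-path of length ℓ in G. -/
/-- A strong clique of `G`: a set of edges of `G` such that every pair of edges
either shares an endpoint or is joined by an edge of `G`. -/
def IsStrongClique {V : Type*} (G : SimpleGraph V) (S : Set (Sym2 V)) : Prop :=
  S ⊆ G.edgeSet ∧
    ∀ e ∈ S, ∀ f ∈ S, ∃ a b, a ∈ e ∧ b ∈ f ∧ (a = b ∨ G.Adj a b)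

/-- `M` is a matching of `G`: a set of edges of `G` that are pairwise disjoint. -/
def IsMatchingSet {V : Type*} (G : SimpleGraph V) (M : Set (Sym2 V)) : Prop :=
  M ⊆ G.edgeSet ∧ ∀ e ∈ M, ∀ f ∈ M, e ≠ f → ∀ v : V, v ∈ e → v ∉ f

/-- An `(x, M)`-path: a path `P` in `G[V(M)]` starting at `x` such that the last edge of
`P` is not in `M`, and every edge of `M` with both endpoints on `P` is an edge of `P`. -/
def IsXMPath {V : Type*} (G : SimpleGraph V) (M : Finset (Sym2 V))
    {x y : V} (P : G.Walk x y) : Prop :=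
  P.IsPath ∧
    (∀ v ∈ P.support, ∃ e ∈ M, v ∈ e) ∧
    (∀ e ∈ P.edges.getLast?, e ∉ M) ∧
    (∀ e ∈ M, (∀ v ∈ e, v ∈ P.support) → e ∈ P.edges)

/-- `M` is an `x`-special matching, where `x'` is the `M`-partner of `x`: every edge
`e ≠ xx'` of `M` can be written as `e = (hd e)(tl e)` where `x` is adjacent to all heads
and to nothing else among `V(M) \ {x, x'}`, `x'` is adjacent to no head or tail, the tails
are pairwise adjacent, the heads are pairwise non-adjacent, and no head is adjacent to a
tail of a different edge. -/
def IsSpecialMatching {V : Type*} (G : SimpleGraph V) (M : Finset (Sym2 V))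
    (x x' : V) : Prop :=
  s(x, x') ∈ M ∧
    ∃ hd tl : Sym2 V → V,
      ∀ e ∈ M, e ≠ s(x, x') →
        e = s(hd e, tl e) ∧
        G.Adj x (hd e) ∧ ¬ G.Adj x (tl e) ∧
        ¬ G.Adj x' (hd e) ∧ ¬ G.Adj x' (tl e) ∧
        ∀ f ∈ M, f ≠ s(x, x') → e ≠ f →
          G.Adj (tl e) (tl f) ∧ ¬ G.Adj (hd e) (hd f) ∧ ¬ G.Adj (hd e) (tl f)

/-!
All lengths are reached in steps of two, starting from `0` and `1`. Given an `(x, M)`-path ending in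
`y`, let `N` consist of `yy'` and the edges of `M` that the path does not meet. If `N` is not
`y`-special, then the strong clique property provides either an edge from `y'` to `V(N) \ {y, y'}`
or a path of length two from `y` through two further edges of `N`, and either one extends the path
by two. If `N` is `y`-special, then the path has positive length. Undo its last step, go to an edge
of `N` other than `yy'`, and continue inside `N`: the tails form a clique and every head is adjacent
to `y`, so any small number of further steps is possible.
-/

section

variable {V : Type*} {G : SimpleGraph V} {M N : Finset (Sym2 V)} {x x' y y' z z' w w' : V}
  {n k : ℕ}

/-- Two edges `e` and `f` are joined if some vertex of `e` is adjacent to some vertex of `f`. In a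
matching which is a strong clique, any two distinct edges are joined. -/
def EdgesJoined (G : SimpleGraph V) (e f : Sym2 V) : Prop :=
  ∃ a ∈ e, ∃ b ∈ f, G.Adj a b

theorem IsMatchingSet.eq_of_mem {S : Set (Sym2 V)} (hS : IsMatchingSet G S) {e f : Sym2 V}
    (he : e ∈ S) (hf : f ∈ S) {v : V} (hve : v ∈ e) (hvf : v ∈ f) : e = f := by
  by_contra hef
  exact hS.2 e he f hf hef v hve hvf

theorem IsMatchingSet.adj {S : Set (Sym2 V)} (hS : IsMatchingSet G S) (hyz : s(y, z) ∈ S) :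
    G.Adj y z :=
  hS.1 hyz

theorem IsMatchingSet.pairwise_edgesJoined {S : Set (Sym2 V)} (hS : IsMatchingSet G S)
    (hclique : IsStrongClique G S) : S.Pairwise (EdgesJoined G) := by
  intro e he f hf hef
  obtain ⟨a, b, ha, hb, rfl | hab⟩ := hclique.2 e he f hf
  · exact absurd (hS.eq_of_mem he hf ha hb) hef
  · exact ⟨a, ha, b, hb, hab⟩

theorem mem_support_concat {P : G.Walk x y} {hyz : G.Adj y z} {v : V} :
    v ∈ (P.concat hyz).support ↔ v ∈ P.support ∨ v = z := by
  simp [SimpleGraph.Walk.support_concat]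

/-- A path in `G[V(M)]` containing every edge of `M` that it spans: an `(x, M)`-path without the
condition on its last edge. -/
def IsMatchingClosedPath (M : Finset (Sym2 V)) (P : G.Walk x y) : Prop :=
  P.IsPath ∧ (∀ v ∈ P.support, ∃ e ∈ M, v ∈ e) ∧ ∀ e ∈ M, (∀ v ∈ e, v ∈ P.support) → e ∈ P.edges

theorem IsXMPath.isMatchingClosedPath {P : G.Walk x y} (hP : IsXMPath G M P) :
    IsMatchingClosedPath M P :=
  ⟨hP.1, hP.2.1, hP.2.2.2⟩

theorem IsMatchingClosedPath.concat (hM : IsMatchingSet G M) {P : G.Walk x y}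
    (hP : IsMatchingClosedPath M P) (hyz : G.Adj y z) (hz : s(z, z') ∈ M) (hzP : z ∉ P.support)
    (hz'P : z' ∈ P.support → z' = y) : IsMatchingClosedPath M (P.concat hyz) := by
  refine ⟨hP.1.concat hzP hyz, fun v hv => ?_, fun e he hsub => ?_⟩
  · rw [mem_support_concat] at hv
    obtain hv | rfl := hv
    · exact hP.2.1 v hv
    · exact ⟨_, hz, Sym2.mem_mk_left _ _⟩
  · simp only [mem_support_concat] at hsub
    rw [SimpleGraph.Walk.edges_concat, List.concat_eq_append, List.mem_append, List.mem_singleton]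
    by_cases hze : z ∈ e
    · obtain rfl := hM.eq_of_mem he hz hze (Sym2.mem_mk_left _ _)
      have hz'P' : z' ∈ P.support :=
        (hsub z' (Sym2.mem_mk_right _ _)).resolve_right (hM.adj hz).ne'
      exact Or.inr (hz'P hz'P' ▸ Sym2.eq_swap)
    · exact Or.inl (hP.2.2 e he fun v hv => (hsub v hv).resolve_right fun h => hze (h ▸ hv))

theorem IsMatchingClosedPath.exists_isXMPath_concat (hM : IsMatchingSet G M) {P : G.Walk x y}
    (hP : IsMatchingClosedPath M P) (hNM : N ⊆ M) (hfree : ∀ e ∈ N, ∀ v ∈ e, v ∉ P.support)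
    (hz : s(z, z') ∈ N) (hyz : G.Adj y z) :
    ∃ Q : G.Walk x z, IsXMPath G M Q ∧ Q.length = P.length + 1 ∧
      ∀ e ∈ N, ∀ v ∈ e, v ∈ Q.support → v = z := by
  have hzP : z ∉ P.support := hfree _ hz z (Sym2.mem_mk_left z z')
  have hz'P : z' ∉ P.support := hfree _ hz z' (Sym2.mem_mk_right z z')
  obtain ⟨hpath, hsupp, hedges⟩ := hP.concat hM hyz (hNM hz) hzP (absurd · hz'P)
  refine ⟨P.concat hyz, ⟨hpath, hsupp, fun e he heM => ?_, hedges⟩, P.length_concat hyz,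
    fun e he v hv hvQ => ?_⟩
  · obtain rfl : s(y, z) = e := by simpa [SimpleGraph.Walk.edges_concat] using he
    obtain rfl : y = z' := by
      simpa [hyz.ne] using
        hM.eq_of_mem heM (hNM hz) (Sym2.mem_mk_right y z) (Sym2.mem_mk_left z z')
    exact hz'P P.end_mem_support
  · rw [mem_support_concat] at hvQ
    exact hvQ.resolve_left (hfree e he v hv)

variable [DecidableEq V]

/-- `XMReach G M x x' y y' N n` says that some `(x, M)`-path of length `n` ends in `y`, where `x'`
and `y'` are the partners of `x` and `y`, and `N` consists of `yy'` and the edges of `M` that the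
path does not meet. A path grows by a single edge to a new edge `zz'` of `M`, or by passing through
`y'` first. -/
inductive XMReach (G : SimpleGraph V) (M : Finset (Sym2 V)) (x x' : V) :
    V → V → Finset (Sym2 V) → ℕ → Prop
  | refl : XMReach G M x x' x x' M 0
  | step {y y' z z' : V} {N : Finset (Sym2 V)} {n : ℕ} (h : XMReach G M x x' y y' N n)
      (hz : s(z, z') ∈ N.erase s(y, y')) (hyz : G.Adj y z) :
      XMReach G M x x' z z' (N.erase s(y, y')) (n + 1)
  | partnerStep {y y' z z' : V} {N : Finset (Sym2 V)} {n : ℕ} (h : XMReach G M x x' y y' N n)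
      (hz : s(z, z') ∈ N.erase s(y, y')) (hyz : G.Adj y' z) :
      XMReach G M x x' z z' (N.erase s(y, y')) (n + 2)

theorem IsMatchingSet.notMem_of_mem_erase (hM : IsMatchingSet G M) (hNM : N ⊆ M) {e f : Sym2 V}
    (he : e ∈ N.erase f) (hf : f ∈ N) {v : V} (hv : v ∈ e) : v ∉ f :=
  have ⟨hne, heN⟩ := Finset.mem_erase.1 he
  hM.2 e (hNM heN) f (hNM hf) hne v hv

namespace XMReach

theorem subset (h : XMReach G M x x' y y' N n) : N ⊆ M := by
  induction h with
  | refl => exact Finset.Subset.rfl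
  | step _ _ _ ih | partnerStep _ _ _ ih => exact (Finset.erase_subset _ _).trans ih

theorem mem (h : XMReach G M x x' y y' N n) (hx : s(x, x') ∈ M) : s(y, y') ∈ N := by
  cases h <;> assumption

theorem card_le (h : XMReach G M x x' y y' N n) : M.card ≤ N.card + n := by
  induction h with
  | refl => simp
  | @step y y' _ _ N _ _ _ _ ih | @partnerStep y y' _ _ N _ _ _ _ ih =>
    have := Finset.pred_card_le_card_erase (s := N) (a := s(y, y'))
    omega

theorem exists_isXMPath (hM : IsMatchingSet G M) (hx : s(x, x') ∈ M)
    (h : XMReach G M x x' y y' N n) :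
    ∃ P : G.Walk x y, IsXMPath G M P ∧ P.length = n ∧
      ∀ e ∈ N, ∀ v ∈ e, v ∈ P.support → v = y := by
  induction h with
  | refl =>
    refine ⟨.nil, ⟨.nil, ?_, by simp, fun e he hsub => ?_⟩, rfl, by simp⟩
    · simpa using ⟨_, hx, Sym2.mem_mk_left _ _⟩
    · induction e with
      | _ a b =>
        simp only [SimpleGraph.Walk.support_nil, List.mem_singleton, Sym2.mem_iff,
          forall_eq_or_imp, forall_eq] at hsub
        exact absurd (hsub.1.trans hsub.2.symm) (hM.adj he).ne
  | @step y y' z z' N n h hz hyz ih =>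
    obtain ⟨P, hP, rfl, hN⟩ := ih
    refine hP.isMatchingClosedPath.exists_isXMPath_concat hM
      ((Finset.erase_subset _ _).trans h.subset) (fun e he v hv hvP => ?_) hz hyz
    obtain rfl := hN e (Finset.mem_of_mem_erase he) v hv hvP
    exact hM.notMem_of_mem_erase h.subset he (h.mem hx) hv (Sym2.mem_mk_left v y')
  | @partnerStep y y' z z' N n h hz hyz ih =>
    obtain ⟨P, hP, rfl, hN⟩ := ih
    have hyN := h.mem hx
    have hyM := h.subset hyN
    have hyy' := hM.adj hyM
    have hy'P : y' ∉ P.support := fun hy' =>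
      hyy'.ne' (hN _ hyN y' (Sym2.mem_mk_right y y') hy')
    have hQ := hP.isMatchingClosedPath.concat hM hyy' (Sym2.eq_swap ▸ hyM) hy'P fun _ => rfl
    rw [show P.length + 2 = (P.concat hyy').length + 1 by
      rw [SimpleGraph.Walk.length_concat]]
    refine hQ.exists_isXMPath_concat hM ((Finset.erase_subset _ _).trans h.subset)
      (fun e he v hv hvQ => ?_) hz hyz
    have hvy := hM.notMem_of_mem_erase h.subset he hyN hv
    obtain hvP | rfl := mem_support_concat.1 hvQ
    · obtain rfl := hN e (Finset.mem_of_mem_erase he) v hv hvP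
      exact hvy (Sym2.mem_mk_left v y')
    · exact hvy (Sym2.mem_mk_right y v)

theorem exists_of_mem_erase (hM : (M : Set (Sym2 V)).Pairwise (EdgesJoined G)) (hx : s(x, x') ∈ M)
    (h : XMReach G M x x' y y' N n) {e : Sym2 V} (he : e ∈ N.erase s(y, y')) :
    ∃ z z', s(z, z') = e ∧ (XMReach G M x x' z z' (N.erase s(y, y')) (n + 1) ∨
      XMReach G M x x' z z' (N.erase s(y, y')) (n + 2)) := by
  have ⟨hne, heN⟩ := Finset.mem_erase.1 he
  obtain ⟨a, ha, z, ⟨z', rfl⟩, haz⟩ := hM (h.subset (h.mem hx)) (h.subset heN) hne.symm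
  refine ⟨z, z', rfl, ?_⟩
  obtain rfl | rfl := Sym2.mem_iff.1 ha
  · exact Or.inl (h.step he haz)
  · exact Or.inr (h.partnerStep he haz)

end XMReach

theorem exists_head_tail_of_forall_not_adj (hN : (N : Set (Sym2 V)).Pairwise (EdgesJoined G))
    (hw : s(w, w') ∈ N) (hcard : 3 ≤ N.card)
    (hpartner : ∀ e ∈ N.erase s(w, w'), ∀ a ∈ e, ¬ G.Adj w' a)
    (hnbr : ∀ e ∈ N.erase s(w, w'), ∀ f ∈ (N.erase s(w, w')).erase e, ∀ a ∈ e, G.Adj w a →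
      ∀ b ∈ f, ¬ G.Adj a b) {e : Sym2 V} (he : e ∈ N.erase s(w, w')) :
    ∃ a a', e = s(a, a') ∧ G.Adj w a ∧ ¬ G.Adj w a' := by
  have ⟨hne, heN⟩ := Finset.mem_erase.1 he
  obtain ⟨c, hc, a, ⟨a', rfl⟩, hca⟩ := hN hw heN hne.symm
  obtain rfl | rfl := Sym2.mem_iff.1 hc
  · refine ⟨a, a', rfl, hca, fun hca' => ?_⟩
    obtain ⟨f, hf⟩ : ((N.erase s(c, w')).erase s(a, a')).Nonempty := by
      rw [← Finset.card_pos, Finset.card_erase_of_mem he, Finset.card_erase_of_mem hw]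
      omega
    have ⟨hfe, hfN⟩ := Finset.mem_erase.1 hf
    obtain ⟨d, hd, b, hb, hdb⟩ := hN heN (Finset.mem_of_mem_erase hfN) hfe.symm
    have hcd : G.Adj c d := by obtain rfl | rfl := Sym2.mem_iff.1 hd <;> assumption
    exact hnbr _ he f hf d hd hcd b hb hdb
  · exact absurd hca (hpartner _ he a (Sym2.mem_mk_left a a'))

theorem isSpecialMatching_of_forall_not_adj (hN : (N : Set (Sym2 V)).Pairwise (EdgesJoined G))
    (hw : s(w, w') ∈ N) (hcard : 3 ≤ N.card)
    (hpartner : ∀ e ∈ N.erase s(w, w'), ∀ a ∈ e, ¬ G.Adj w' a)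
    (hnbr : ∀ e ∈ N.erase s(w, w'), ∀ f ∈ (N.erase s(w, w')).erase e, ∀ a ∈ e, G.Adj w a →
      ∀ b ∈ f, ¬ G.Adj a b) : IsSpecialMatching G N w w' := by
  have : Nonempty V := ⟨w⟩
  choose! hd tl heq hadj hnadj using fun e (he : e ∈ N.erase s(w, w')) =>
    exists_head_tail_of_forall_not_adj hN hw hcard hpartner hnbr he
  refine ⟨hw, hd, tl, fun e heN hne => ?_⟩
  have he : e ∈ N.erase s(w, w') := Finset.mem_erase.2 ⟨hne, heN⟩
  have hends : ∀ e ∈ N.erase s(w, w'), ∀ a, a ∈ e ↔ a = hd e ∨ a = tl e := fun e he a => by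
    conv_lhs => rw [heq e he, Sym2.mem_iff]
  have hhd : ∀ e ∈ N.erase s(w, w'), hd e ∈ e := fun e he => (hends e he _).2 (Or.inl rfl)
  have htl : ∀ e ∈ N.erase s(w, w'), tl e ∈ e := fun e he => (hends e he _).2 (Or.inr rfl)
  refine ⟨heq e he, hadj e he, hnadj e he, hpartner e he _ (hhd e he), hpartner e he _ (htl e he),
    fun f hfN hfne hef => ?_⟩
  have hf : f ∈ N.erase s(w, w') := Finset.mem_erase.2 ⟨hfne, hfN⟩
  have hnbr_e := hnbr e he f (Finset.mem_erase.2 ⟨hef.symm, hf⟩) _ (hhd e he) (hadj e he)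
  have hnbr_f := hnbr f hf e (Finset.mem_erase.2 ⟨hef, he⟩) _ (hhd f hf) (hadj f hf)
  refine ⟨?_, hnbr_e _ (hhd f hf), hnbr_e _ (htl f hf)⟩
  obtain ⟨c, hc, d, hd', hcd⟩ := hN heN hfN hef
  obtain rfl | rfl := (hends e he c).1 hc
  · exact absurd hcd (hnbr_e d hd')
  obtain rfl | rfl := (hends f hf d).1 hd'
  · exact absurd hcd.symm (hnbr_f _ hc)
  · exact hcd

namespace IsSpecialMatching

variable {a a' b b' : V}

theorem adj_or_adj (h : IsSpecialMatching G N w w') (ha : s(a, a') ∈ N.erase s(w, w')) :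
    G.Adj w a ∨ G.Adj w a' := by
  obtain ⟨-, hd, tl, hlabel⟩ := h
  have ⟨hne, haN⟩ := Finset.mem_erase.1 ha
  obtain ⟨heq, hadj, -⟩ := hlabel _ haN hne
  obtain ⟨h, -⟩ | ⟨-, h⟩ := Sym2.eq_iff.1 heq
  · exact Or.inl (by rwa [h])
  · exact Or.inr (by rwa [h])

theorem exists_adj {T : Finset (Sym2 V)} (h : IsSpecialMatching G N w w')
    (hT : T ⊆ N.erase s(w, w')) (hne : T.Nonempty) : ∃ a a', s(a, a') ∈ T ∧ G.Adj w a := by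
  obtain ⟨⟨a, a'⟩, ha⟩ := hne
  obtain hwa | hwa' := h.adj_or_adj (hT ha)
  · exact ⟨a, a', ha, hwa⟩
  · exact ⟨a', a, Sym2.eq_swap ▸ ha, hwa'⟩

theorem tail_adj_tail (h : IsSpecialMatching G N w w') (ha : s(a, a') ∈ N.erase s(w, w'))
    (hb : s(b, b') ∈ (N.erase s(w, w')).erase s(a, a')) (hwa : G.Adj w a) (hwb : G.Adj w b) :
    G.Adj a' b' := by
  obtain ⟨-, hd, tl, hlabel⟩ := h
  have htl : ∀ c c', s(c, c') ∈ N.erase s(w, w') → G.Adj w c → c' = tl s(c, c') := by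
    intro c c' hc hwc
    have ⟨hne, hcN⟩ := Finset.mem_erase.1 hc
    obtain ⟨heq, -, hnadj, -⟩ := hlabel _ hcN hne
    obtain ⟨-, h⟩ | ⟨h, -⟩ := Sym2.eq_iff.1 heq
    · exact h
    · exact absurd hwc (by rwa [h])
  have ⟨hba, hb'⟩ := Finset.mem_erase.1 hb
  have ⟨hane, haN⟩ := Finset.mem_erase.1 ha
  have ⟨hbne, hbN⟩ := Finset.mem_erase.1 hb'
  rw [htl a a' ha hwa, htl b b' hb' hwb]
  obtain ⟨-, -, -, -, -, hpair⟩ := hlabel _ haN hane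
  exact (hpair _ hbN hbne hba.symm).1

end IsSpecialMatching

namespace XMReach

variable {a a' : V}

theorem exists_add_of_tail (h : XMReach G M x x' a a' N n) (hw : IsSpecialMatching G N w w')
    (ha : s(a, a') ∈ N.erase s(w, w')) (hwa' : G.Adj w a') (hcard : 3 ≤ N.card)
    (hk : 1 ≤ k) (hk3 : k ≤ 3) : ∃ z z' N', XMReach G M x x' z z' N' (n + k) := by
  obtain ⟨b, b', hb, hwb⟩ : ∃ b b', s(b, b') ∈ (N.erase s(w, w')).erase s(a, a') ∧ G.Adj w b := by
    refine hw.exists_adj (Finset.erase_subset _ _) (Finset.card_pos.1 ?_)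
    rw [Finset.card_erase_of_mem ha, Finset.card_erase_of_mem hw.1]
    omega
  have hab' : G.Adj a b' := by
    rw [Sym2.eq_swap (a := a)] at ha hb
    exact hw.tail_adj_tail ha hb hwa' hwb
  have hwN := hw.1
  have hb_step : XMReach G M x x' b' b (N.erase s(a, a')) (n + 1) :=
    h.step (by grind [Sym2.eq_swap]) hab'
  interval_cases k
  · exact ⟨_, _, _, hb_step⟩
  · exact ⟨w, w', _, h.partnerStep (by grind) hwa'.symm⟩
  · exact ⟨w, w', _, hb_step.partnerStep (by grind [Sym2.eq_swap]) hwb.symm⟩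

theorem exists_add_of_head (h : XMReach G M x x' a a' N n) (hw : IsSpecialMatching G N w w')
    (ha : s(a, a') ∈ N.erase s(w, w')) (hwa : G.Adj w a) (hcard : 3 ≤ N.card)
    (hk : 1 ≤ k) (hk3 : k ≤ 3) (hkN : k < N.card) :
    ∃ z z' N', XMReach G M x x' z z' N' (n + k) := by
  have hcard_erase : ((N.erase s(w, w')).erase s(a, a')).card = N.card - 2 := by
    rw [Finset.card_erase_of_mem ha, Finset.card_erase_of_mem hw.1, Nat.sub_sub]
  obtain ⟨b, b', hb, hwb⟩ : ∃ b b', s(b, b') ∈ (N.erase s(w, w')).erase s(a, a') ∧ G.Adj w b :=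
    hw.exists_adj (Finset.erase_subset _ _) (Finset.card_pos.1 (by omega))
  have hab' : G.Adj a' b' := hw.tail_adj_tail ha hb hwa hwb
  have hwN := hw.1
  have hb_step : XMReach G M x x' b' b (N.erase s(a, a')) (n + 2) :=
    h.partnerStep (by grind [Sym2.eq_swap]) hab'
  interval_cases k
  · exact ⟨w, w', _, h.step (by grind) hwa.symm⟩
  · exact ⟨_, _, _, hb_step⟩
  · obtain ⟨c, c', hc, hwc⟩ : ∃ c c',
        s(c, c') ∈ ((N.erase s(w, w')).erase s(a, a')).erase s(b, b') ∧ G.Adj w c :=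
      hw.exists_adj ((Finset.erase_subset _ _).trans (Finset.erase_subset _ _))
        (Finset.card_pos.1 (by rw [Finset.card_erase_of_mem hb]; omega))
    have hbc' : G.Adj b' c' :=
      hw.tail_adj_tail (Finset.mem_of_mem_erase hb) (by grind) hwb hwc
    exact ⟨c', c, _, hb_step.step (by grind [Sym2.eq_swap]) hbc'⟩

theorem exists_add_of_isSpecialMatching (hM : (M : Set (Sym2 V)).Pairwise (EdgesJoined G))
    (hx : s(x, x') ∈ M) (h : XMReach G M x x' y y' N n)
    (hw : IsSpecialMatching G (N.erase s(y, y')) w w') (hk3 : 3 ≤ k) (hk4 : k ≤ 4)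
    (hcard : k < N.card) : ∃ z z' N', XMReach G M x x' z z' N' (n + k) := by
  have hcard_erase := Finset.card_erase_of_mem (h.mem hx)
  obtain ⟨e, he⟩ : ((N.erase s(y, y')).erase s(w, w')).Nonempty := by
    rw [← Finset.card_pos, Finset.card_erase_of_mem hw.1]
    omega
  have hadd : ∀ {a a' i j}, e = s(a, a') → XMReach G M x x' a a' (N.erase s(y, y')) i → 1 ≤ j →
      j ≤ 3 → j < k → ∃ z z' N', XMReach G M x x' z z' N' (i + j) := by
    rintro a a' i j rfl ha hj hj3 hjk
    obtain hwa | hwa' := hw.adj_or_adj he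
    · exact ha.exists_add_of_head hw he hwa (by omega) hj hj3 (by omega)
    · exact ha.exists_add_of_tail hw he hwa' (by omega) hj hj3
  obtain ⟨a, a', hae, ha | ha⟩ := h.exists_of_mem_erase hM hx (Finset.mem_of_mem_erase he)
  · rw [show n + k = n + 1 + (k - 1) by omega]
    exact hadd hae.symm ha (by omega) (by omega) (by omega)
  · rw [show n + k = n + 2 + (k - 2) by omega]
    exact hadd hae.symm ha (by omega) (by omega) (by omega)

theorem exists_add_two_of_not_isSpecialMatching
    (hM : (M : Set (Sym2 V)).Pairwise (EdgesJoined G)) (h : XMReach G M x x' y y' N n)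
    (hy : s(y, y') ∈ N) (hcard : 3 ≤ N.card) (hnspecial : ¬ IsSpecialMatching G N y y') :
    ∃ z z' N', XMReach G M x x' z z' N' (n + 2) := by
  contrapose! hnspecial
  refine isSpecialMatching_of_forall_not_adj (hM.mono (Finset.coe_subset.2 h.subset)) hy hcard ?_ ?_
  · rintro _ he a ⟨a', rfl⟩ hya
    exact hnspecial _ _ _ (h.partnerStep he hya)
  · rintro _ he _ hf a ⟨a', rfl⟩ hya b ⟨b', rfl⟩ hab
    exact hnspecial _ _ _ ((h.step he hya).step hf hab)

theorem exists_add_two (hM : (M : Set (Sym2 V)).Pairwise (EdgesJoined G)) (hx : s(x, x') ∈ M)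
    (hnspecial : ¬ IsSpecialMatching G M x x') (h : XMReach G M x x' y y' N n)
    (hn : n + 3 ≤ M.card) : ∃ z z' N', XMReach G M x x' z z' N' (n + 2) := by
  have hcard := h.card_le
  by_cases hy : IsSpecialMatching G N y y'
  · cases h with
    | refl => exact absurd hy hnspecial
    | step h =>
      have := h.card_le
      exact h.exists_add_of_isSpecialMatching (k := 3) hM hx hy le_rfl (by simp) (by omega)
    | partnerStep h =>
      have := h.card_le
      exact h.exists_add_of_isSpecialMatching (k := 4) hM hx hy (by simp) le_rfl (by omega)
  · exact h.exists_add_two_of_not_isSpecialMatching hM (h.mem hx) (by omega) hy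

theorem exists_of_lt_card (hM : (M : Set (Sym2 V)).Pairwise (EdgesJoined G)) (hx : s(x, x') ∈ M)
    (hnspecial : ¬ IsSpecialMatching G M x x') (hz : s(z, z') ∈ M.erase s(x, x'))
    (hxz : G.Adj x z) (hn : n < M.card) : ∃ y y' N, XMReach G M x x' y y' N n := by
  induction n using Nat.twoStepInduction with
  | zero => exact ⟨x, x', M, refl⟩
  | one => exact ⟨z, z', _, refl.step hz hxz⟩
  | more n ih _ =>
    obtain ⟨y, y', N, h⟩ := ih (by omega)
    exact h.exists_add_two hM hx hnspecial hn

end XMReach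

end

theorem stmt16_general {V : Type*} (G : SimpleGraph V) (M : Finset (Sym2 V))
    (hM : IsMatchingSet G ↑M) (hclique : IsStrongClique G ↑M) (x x' : V) (hx : s(x, x') ∈ M)
    (hnspecial : ¬ IsSpecialMatching G M x x')
    (hnbr : ∃ y, (∃ e ∈ M, y ∈ e) ∧ y ≠ x ∧ y ≠ x' ∧ G.Adj x y) (ℓ : ℕ) (hℓ : ℓ < M.card) :
    ∃ (y : V) (P : G.Walk x y), IsXMPath G M P ∧ P.length = ℓ := by
  classical
  obtain ⟨z, ⟨_, hzM, z', rfl⟩, hzx, hzx', hxz⟩ := hnbr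
  have hne : s(z, z') ≠ s(x, x') := by simp [hzx, hzx']
  obtain ⟨y, y', N, h⟩ := XMReach.exists_of_lt_card (hM.pairwise_edgesJoined hclique) hx hnspecial
    (Finset.mem_erase.2 ⟨hne, hzM⟩) hxz hℓ
  obtain ⟨P, hP, hlen, -⟩ := h.exists_isXMPath hM hx
  exact ⟨y, P, hP, hlen⟩

/-- Let `M` be a matching of `G` of size `m ≥ 2` that is also a strong clique of `G`, and
let `x ∈ V(M)` with `M`-partner `x'`. If `M` is not `x`-special and `x` has a neighbor in
`V(M) \ {x, x'}`, then for every `ℓ ∈ {1, …, m - 1}` there exists an `(x, M)`-path of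
length `ℓ` in `G`. -/
theorem stmt16 {V : Type*} [Fintype V] [DecidableEq V] (G : SimpleGraph V)
    (M : Finset (Sym2 V))
    (hmatch : IsMatchingSet G ↑M) (hsc : IsStrongClique G ↑M)
    (m : ℕ) (hm : M.card = m) (hm2 : 2 ≤ m)
    (x x' : V) (hx : s(x, x') ∈ M)
    (hnspecial : ¬ IsSpecialMatching G M x x')
    (hnbr : ∃ y : V, (∃ e ∈ M, y ∈ e) ∧ y ≠ x ∧ y ≠ x' ∧ G.Adj x y) :
    ∀ ℓ : ℕ, 1 ≤ ℓ → ℓ ≤ m - 1 →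
      ∃ (y : V) (P : G.Walk x y), IsXMPath G M P ∧ P.length = ℓ := by
  exact fun ℓ _ hℓ => stmt16_general G M hmatch hsc x x' hx hnspecial hnbr ℓ (by omega)
end

section
/- Let M be a matching of a graph G that is also a strong clique of G. If |M| = 2m ≥ 6, then G contains a cycle of length 2m. -/
/-!
Let the matching edges be indexed by `ι` and their ends by `ι × Bool`. A cycle through them is
recorded as a circuit: a cyclic sequence of passages through distinct matching edges, each visiting
one or both ends of its edge. The length of the cycle is the total weight of the circuit.

Any six matching edges carry a circuit of weight 4. From there the weight grows in steps of 2: a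
circuit of weight at most `|M| - 2` misses two matching edges, and unless the weight can be raised
by 2 at once, a detour through them keeps the weight and increases the number of passages, which is
bounded by the weight. If an edge is traversed, the detour replaces that passage and its two
neighbours. If every edge is visited at one end only, it inserts the missing edges.
-/

theorem cycle_chain_coe_iff {α : Type*} {r : α → α → Prop} {l : List α} :
    (l : Cycle α).Chain r ↔ l.IsChain r ∧ ∀ a ∈ l.getLast?, ∀ b ∈ l.head?, r a b := by
  cases l with
  | nil => simp
  | cons a l =>
    rw [Cycle.chain_coe_cons, ← List.cons_append, List.isChain_append]
    simp

theorem exists_isCycle_of_chain {V : Type*} {G : SimpleGraph V} {l : List V}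
    (hchain : (l : Cycle V).Chain G.Adj) (hnd : l.Nodup) (hlen : 3 ≤ l.length) :
    ∃ (v : V) (C : G.Walk v v), C.IsCycle ∧ C.length = l.length := by
  cases l with
  | nil => simp at hlen
  | cons v l =>
    rw [Cycle.chain_coe_cons] at hchain
    let C : G.Walk v v := (SimpleGraph.Walk.ofSupport _ (List.cons_ne_nil _ _) hchain).copy rfl
      (by simp)
    have hsupp : C.support = v :: (l ++ [v]) :=
      (SimpleGraph.Walk.support_copy ..).trans (SimpleGraph.Walk.support_ofSupport ..)
    have hlength : C.length = l.length + 1 := by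
      simpa [hsupp] using C.length_support.symm
    refine ⟨v, C, ?_, by simp [hlength]⟩
    rw [SimpleGraph.Walk.isCycle_iff_isPath_tail_and_le_length]
    refine ⟨?_, by simpa [hlength] using hlen⟩
    rw [SimpleGraph.Walk.isPath_def, SimpleGraph.Walk.support_tail_of_not_nil, hsupp]
    · simpa using (List.perm_append_comm (l₁ := [v]) (l₂ := l)).nodup_iff.1 hnd
    · intro h
      simp [← SimpleGraph.Walk.length_eq_zero_iff, hlength] at h

theorem exists_eq_cons_cons_cons {α : Type*} {l : List α} (h : 3 ≤ l.length) :
    ∃ a b c t, l = a :: b :: c :: t := by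
  match l, h with
  | a :: b :: c :: t, _ => exact ⟨a, b, c, t, rfl⟩

theorem exists_isRotated_cons_cons_cons {α : Type*} {l : List α} {a : α} (hl : 3 ≤ l.length)
    (ha : a ∈ l) : ∃ x y t, l ~r x :: a :: y :: t := by
  obtain ⟨l₁, l₂, rfl⟩ := List.mem_iff_append.1 ha
  have hrot := List.isRotated_append (l := l₁) (l' := a :: l₂)
  have hlen := hrot.perm.length_eq
  obtain ⟨y, t, ht⟩ := List.exists_cons_of_length_pos (l := l₂ ++ l₁) (by grind)
  obtain ⟨t, x, rfl⟩ := (List.eq_nil_or_concat t).resolve_left (by rintro rfl; grind)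
  rw [List.concat_eq_append] at ht
  rw [List.cons_append, ht] at hrot
  exact ⟨x, y, t, hrot.trans (List.isRotated_append (l := a :: y :: t) (l' := [x]))⟩

theorem bool_eq_of_ne_of_ne {a b c : Bool} (hb : a ≠ b) (hc : a ≠ c) : b = c :=
  (Bool.eq_not.2 hb.symm).trans (Bool.eq_not.2 hc.symm).symm

/-- Any two of the edges indexed by `ι` are joined by an edge of `H`. -/
def IsLinked {ι : Type*} (H : SimpleGraph (ι × Bool)) : Prop :=
  Pairwise fun i j => ∃ u v, H.Adj (i, u) (j, v)

/-- A choice of ports under which no triangle of edges has exactly two, and no quadrilateral all, of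
its edges visited at one end only. Here `port i j` is the end of the `i`-th edge from which the
`j`-th edge is reached. The `x`-th edge agrees on `u` and `v` if `port x u = port x v`. -/
structure IsTight {ι : Type*} (port : ι → ι → Bool) : Prop where
  triangle : ∀ {i j k : ι}, [i, j, k].Nodup → port i j = port i k → port j i = port j k →
    port k i = port k j
  quad : ∀ {i j k l : ι}, [i, j, k, l].Nodup → port i l = port i j → port j i = port j k →
    port k j = port k l → port l k ≠ port l i

/-- A triangle of edges each of which is visited at one end only. Another edge `u` is joined to the
triangle at `x` if `port x u` is the end of `x` which the triangle visits. -/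
structure IsConcordant {ι : Type*} (port : ι → ι → Bool) (x f g : ι) : Prop where
  fst : port x f = port x g
  snd : port f x = port f g
  trd : port g x = port g f

section Tight

variable {ι : Type*} {port : ι → ι → Bool} {x y z f g u v w : ι}

theorem IsConcordant.rotate (hc : IsConcordant port x f g) : IsConcordant port f g x :=
  ⟨hc.snd.symm, hc.trd.symm, hc.fst⟩

theorem IsConcordant.flip (hc : IsConcordant port x f g) : IsConcordant port x g f :=
  ⟨hc.fst.symm, hc.trd, hc.snd⟩

namespace IsTight

theorem port_ne_of_agree_of_agree (h : IsTight port) (hnd : [u, v, x, y].Nodup)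
    (hx : port x u = port x v) (hy : port y u = port y v) : port u x ≠ port u y := by
  intro hu
  have hxv := h.triangle (i := x) (j := u) (k := v) (by grind) hx
  have hyv := h.triangle (i := y) (j := u) (k := v) (by grind) hy
  have hxu := h.triangle (i := x) (j := v) (k := u) (by grind) hx.symm
  have hyu := h.triangle (i := y) (j := v) (k := u) (by grind) hy.symm
  have hv : port v x = port v y := by
    by_cases huv : port u x = port u v
    · exact (hxv huv).trans (hyv (hu ▸ huv)).symm
    · exact bool_eq_of_ne_of_ne (mt (fun e => hxu e.symm) huv) (mt (fun e => hyu e.symm) (hu ▸ huv))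
  exact h.quad (by grind) hx.symm hu hy hv.symm

theorem not_agree_of_agree_of_agree (h : IsTight port) (hnd : [u, v, x, y, z].Nodup)
    (hx : port x u = port x v) (hy : port y u = port y v) : port z u ≠ port z v := fun hz =>
  h.port_ne_of_agree_of_agree (by grind) hy hz <|
    bool_eq_of_ne_of_ne (h.port_ne_of_agree_of_agree (by grind) hx hy)
      (h.port_ne_of_agree_of_agree (by grind) hx hz)

theorem port_ne_of_joined (h : IsTight port) (hc : IsConcordant port x f g)
    (hnd : [u, x, f, g].Nodup) (hu : port x u = port x f) : port u x ≠ port u f := fun hux =>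
  have hfu := h.triangle (i := x) (j := u) (k := f) (by grind) hu hux
  h.quad (i := x) (j := g) (k := f) (l := u) (by grind) (hu.trans hc.fst) hc.trd
    (hc.snd.symm.trans hfu) hux.symm

theorem port_eq_of_joined (h : IsTight port) (hc : IsConcordant port x f g)
    (hnd : [u, x, f, g].Nodup) (hu : port x u = port x f) : port u f = port u g :=
  bool_eq_of_ne_of_ne (h.port_ne_of_joined hc hnd hu)
    (h.port_ne_of_joined hc.flip (by grind) (hu.trans hc.fst))

theorem not_joined_snd (h : IsTight port) (hc : IsConcordant port x f g)
    (hnd : [u, x, f, g].Nodup) (hu : port x u = port x f) : port f u ≠ port f g := fun hfu =>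
  h.port_ne_of_joined hc hnd hu <|
    h.triangle (by grind) hu.symm (hc.snd.trans hfu.symm)

theorem not_joined_trd (h : IsTight port) (hc : IsConcordant port x f g)
    (hnd : [u, x, f, g].Nodup) (hu : port x u = port x f) : port g u ≠ port g x := fun hgu =>
  h.not_joined_snd hc.flip (by grind) (hu.trans hc.fst) (hgu.trans hc.trd)

theorem not_joined_of_joined (h : IsTight port) (hc : IsConcordant port x f g)
    (hnd : [u, v, x, f, g].Nodup) (hu : port x u = port x f) : port x v ≠ port x f := fun hv =>
  h.not_agree_of_agree_of_agree (by grind) (hu.trans hv.symm)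
    (bool_eq_of_ne_of_ne (h.not_joined_snd hc (by grind) hu).symm
      (h.not_joined_snd hc (by grind) hv).symm)
    (bool_eq_of_ne_of_ne (h.not_joined_trd hc (by grind) hu).symm
      (h.not_joined_trd hc (by grind) hv).symm)

theorem isConcordant_of_joined_of_joined (h : IsTight port) (hc : IsConcordant port x f g)
    (hnd : [u, v, x, f, g].Nodup) (hu : port x u = port x f) (hv : port f v = port f g) :
    IsConcordant port g u v := by
  have hux := h.port_ne_of_joined hc (by grind) hu
  have hug := h.port_eq_of_joined hc (by grind) hu
  have hvf := h.port_ne_of_joined hc.rotate (by grind) hv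
  have hg : port g u = port g v :=
    bool_eq_of_ne_of_ne (h.not_joined_trd hc (by grind) hu).symm
      (h.not_joined_snd hc.rotate (by grind) hv).symm
  have huv : port u g = port u v := by
    by_contra hne
    have huxv : port u x = port u v := bool_eq_of_ne_of_ne (hug ▸ hux).symm hne
    have hvuf : port v u ≠ port v f :=
      h.quad (by grind) (hv.trans hc.snd.symm) hu.symm huxv
    exact hne (h.triangle (by grind) hg.symm (bool_eq_of_ne_of_ne hvf hvuf.symm))
  exact ⟨hg, huv, h.triangle (by grind) hg huv⟩

theorem not_joined_of_joined_of_joined (h : IsTight port) (hc : IsConcordant port x f g)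
    (hnd : [u, v, w, x, f, g].Nodup) (hu : port x u = port x f) (hv : port f v = port f g) :
    port g w ≠ port g x := by
  intro hw
  have hguv := h.isConcordant_of_joined_of_joined hc (by grind) hu hv
  have hxvw := h.isConcordant_of_joined_of_joined hc.rotate (by grind) hv hw
  have hfuw := h.isConcordant_of_joined_of_joined hc.flip (by grind) (hu.trans hc.fst)
    (hw.trans hc.trd)
  have hu' := h.port_eq_of_joined hc (by grind) hu
  have hv' := h.port_eq_of_joined hc.rotate (by grind) hv
  have hw' := h.port_eq_of_joined hc.rotate.rotate (by grind) hw
  exact h.quad (i := u) (j := v) (k := x) (l := w) (by grind)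
    (by grind [IsConcordant]) (by grind [IsConcordant]) (by grind [IsConcordant])
    (by grind [IsConcordant])

theorem joined_of_joined_of_joined (h : IsTight port) (hc : IsConcordant port x f g)
    (hnd : [u, v, w, x, f, g].Nodup) (hu : port x u = port x f) (hv : port f v = port f g) :
    port g w = port g x := by
  have hwx : port x w ≠ port x f := h.not_joined_of_joined hc (by grind) hu
  by_contra hwg
  have hguv := h.isConcordant_of_joined_of_joined hc (by grind) hu hv
  have hvx := h.port_eq_of_joined hc.rotate (by grind) hv
  have hxvw : port x v = port x w :=
    bool_eq_of_ne_of_ne (h.not_joined_trd hc.rotate (by grind) hv).symm hwx.symm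
  have hgvw : port g v = port g w :=
    bool_eq_of_ne_of_ne (h.not_joined_snd hc.rotate (by grind) hv).symm (Ne.symm hwg)
  by_cases hvw : port v w = port v x
  · exact h.not_joined_trd hguv (by grind) (hgvw.symm.trans hguv.fst.symm) (hvw.trans hvx.symm)
  · have hwx : port w v ≠ port w x := fun e =>
      hvw (h.triangle (by grind) hxvw.symm e.symm).symm
    have hwg : port w v ≠ port w g := fun e =>
      hvw ((h.triangle (by grind) hgvw.symm e.symm).symm.trans hvx)
    exact h.quad (i := x) (j := v) (k := g) (l := w) (by grind) hxvw.symm hvx.symm hgvw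
      (bool_eq_of_ne_of_ne hwg hwx)

theorem not_joined_of_joined_snd (h : IsTight port) (hc : IsConcordant port x f g)
    (hnd : [u, v, w, x, f, g].Nodup) (hu : port x u = port x f) : port f v ≠ port f g := fun hv =>
  h.not_joined_of_joined_of_joined hc hnd hu hv
    (h.joined_of_joined_of_joined hc hnd hu hv)

theorem not_joined (h : IsTight port) (hc : IsConcordant port x f g)
    (hnd : [u, v, w, x, f, g].Nodup) : port x u ≠ port x f := by
  intro hu
  have hnd' : [u, w, v, x, f, g].Nodup := by grind
  have hu' := hu.trans hc.fst
  refine h.not_agree_of_agree_of_agree (show [v, w, x, f, g].Nodup by grind) ?_ ?_ ?_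
  · exact bool_eq_of_ne_of_ne (h.not_joined_of_joined hc (by grind) hu).symm
      (h.not_joined_of_joined hc (by grind) hu).symm
  · exact bool_eq_of_ne_of_ne (h.not_joined_of_joined_snd hc hnd hu).symm
      (h.not_joined_of_joined_snd hc hnd' hu).symm
  · exact bool_eq_of_ne_of_ne (h.not_joined_of_joined_snd hc.flip (w := w) (by grind) hu').symm
      (h.not_joined_of_joined_snd hc.flip (w := v) (by grind) hu').symm

theorem not_isConcordant (h : IsTight port) (hnd : [u, v, w, x, f, g].Nodup) :
    ¬ IsConcordant port x f g := by
  intro hc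
  have hnot {x f g} (hc : IsConcordant port x f g) (hnd : [u, v, w, x, f, g].Nodup) :
      port x u = port x v :=
    bool_eq_of_ne_of_ne (h.not_joined hc hnd).symm
      (h.not_joined hc (v := u) (w := w) (by grind)).symm
  exact h.not_agree_of_agree_of_agree (by grind) (hnot hc hnd) (hnot hc.rotate (by grind))
    (hnot hc.rotate.rotate (by grind))

theorem not_agree_of_agree (h : IsTight port) (hnd : [u, v, w, x, f, g].Nodup)
    (hx : port x f = port x g) : port f x ≠ port f g := fun hf =>
  h.not_isConcordant hnd ⟨hx, hf, h.triangle (by grind) hx hf⟩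

theorem not_agree_on_three (h : IsTight port) (hnd : [u, v, w, x, f, g].Nodup)
    (hxfg : port x f = port x g) : port x w ≠ port x f := by
  intro hxwf
  have hxwg := hxwf.trans hxfg
  have hwf := h.not_agree_of_agree (show [u, v, g, x, w, f].Nodup by grind) hxwf
  have hwg := h.not_agree_of_agree (show [u, v, f, x, w, g].Nodup by grind) hxwg
  have hfw := h.not_agree_of_agree (show [u, v, g, x, f, w].Nodup by grind) hxwf.symm
  have hfg := h.not_agree_of_agree (show [u, v, w, x, f, g].Nodup by grind) hxfg
  have hw := bool_eq_of_ne_of_ne hwf hwg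
  have hf := bool_eq_of_ne_of_ne hfw hfg
  exact h.not_agree_of_agree (show [u, v, x, w, f, g].Nodup by grind) hw hf

theorem card_le [Fintype ι] (h : IsTight port) : Fintype.card ι ≤ 5 := by
  classical
  by_contra! hcard
  obtain ⟨x⟩ : Nonempty ι := Fintype.card_pos_iff.1 (by lia)
  obtain ⟨b, -, hb⟩ := Finset.exists_lt_card_fiber_of_mul_lt_card_of_maps_to (n := 2)
    (s := ({x}ᶜ : Finset ι)) (t := Finset.univ) (f := port x) (by simp)
    (by rw [Finset.card_compl, Finset.card_singleton, Finset.card_univ, Fintype.card_bool]; lia)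
  obtain ⟨w, hw, f, hf, g, hg, hwf, hwg, hfg⟩ := Finset.two_lt_card.1 hb
  obtain ⟨u, hu, v, hv, huv⟩ : ∃ u ∈ ({x, w, f, g}ᶜ : Finset ι), ∃ v ∈ ({x, w, f, g}ᶜ : Finset ι),
      u ≠ v := by
    rw [← Finset.one_lt_card, Finset.card_compl]
    have := Finset.card_le_four (a := x) (b := w) (c := f) (d := g)
    lia
  simp only [Finset.mem_filter, Finset.mem_compl, Finset.mem_insert, Finset.mem_singleton]
    at hw hf hg hu hv
  exact h.not_agree_on_three (show [u, v, w, x, f, g].Nodup by grind)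
    (hf.2.trans hg.2.symm) (hw.2.trans hf.2.symm)

end IsTight

end Tight

theorem exists_port {ι : Type*} {H : SimpleGraph (ι × Bool)} (hlink : IsLinked H) :
    ∃ port : ι → ι → Bool, Pairwise fun i j => H.Adj (i, port i j) (j, port j i) := by
  obtain ⟨_, -⟩ := exists_wellFoundedLT ι
  choose u v huv using hlink
  refine ⟨fun i j => if hij : i < j then u hij.ne else if hji : j < i then v hji.ne else false, ?_⟩
  intro i j hij
  rcases hij.lt_or_gt with hlt | hlt
  · simpa [hlt, hlt.not_gt] using huv hlt.ne
  · simpa [hlt, hlt.not_gt] using (huv hlt.ne).symm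

/-- A passage through the `edge`-th matching edge, whose two ends (its ports) are indexed by `Bool`:
it enters at the port `inn` and leaves at the port `out`. If the two agree, the passage visits only
one end of the edge; otherwise it traverses the edge. -/
structure Passage (ι : Type*) where
  edge : ι
  inn : Bool
  out : Bool

namespace Passage

variable {ι : Type*} {H : SimpleGraph (ι × Bool)}

/-- The port at which a passage enters its edge. -/
def entry (p : Passage ι) : ι × Bool := (p.edge, p.inn)

/-- The port at which a passage leaves its edge. -/
def exit (p : Passage ι) : ι × Bool := (p.edge, p.out)

/-- The passage traversed backwards. -/
def reverse (p : Passage ι) : Passage ι := ⟨p.edge, p.out, p.inn⟩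

/-- The number of vertices which a passage visits. -/
def weight (p : Passage ι) : ℕ := if p.inn = p.out then 1 else 2

/-- The vertices which a passage visits, in order. -/
def ports (p : Passage ι) : List (ι × Bool) :=
  if p.inn = p.out then [p.entry] else [p.entry, p.exit]

/-- The passage `q` may come directly after the passage `p` in a walk of `H`. -/
def Follows (H : SimpleGraph (ι × Bool)) (p q : Passage ι) : Prop := H.Adj p.exit q.entry

/-- The number of vertices which a list of passages visits. -/
def totalWeight (l : List (Passage ι)) : ℕ := (l.map weight).sum

/-- A cyclic sequence of passages through distinct edges which are joined up by edges of `H`. -/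
structure IsCircuit (H : SimpleGraph (ι × Bool)) (l : List (Passage ι)) : Prop where
  chain : (l : Cycle (Passage ι)).Chain (Follows H)
  nodup : (l.map edge).Nodup

theorem IsCircuit.of_isRotated {l l' : List (Passage ι)} (hl : IsCircuit H l) (h : l ~r l') :
    IsCircuit H l' where
  chain := Cycle.coe_eq_coe.2 h ▸ hl.chain
  nodup := (h.perm.map edge).nodup_iff.1 hl.nodup

theorem length_ports (p : Passage ι) : p.ports.length = p.weight := by
  unfold ports weight; split_ifs <;> rfl

theorem ports_ne_nil (p : Passage ι) : p.ports ≠ [] := by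
  unfold ports; split_ifs <;> simp

theorem head?_ports (p : Passage ι) : p.ports.head? = some p.entry := by
  unfold ports; split_ifs <;> rfl

theorem getLast?_ports (p : Passage ι) : p.ports.getLast? = some p.exit := by
  unfold ports entry exit; split_ifs with h <;> simp [h]

theorem isChain_ports (hH : ∀ i, H.Adj (i, false) (i, true)) (p : Passage ι) :
    p.ports.IsChain H.Adj := by
  obtain ⟨e, _ | _, _ | _⟩ := p <;> simp [ports, entry, exit, hH, (hH e).symm]

theorem nodup_ports (p : Passage ι) : p.ports.Nodup := by
  unfold ports entry exit; split_ifs with h <;> simp [h]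

theorem fst_eq_of_mem_ports {p : Passage ι} {v : ι × Bool} (hv : v ∈ p.ports) : v.1 = p.edge := by
  unfold ports entry exit at hv; split_ifs at hv <;> aesop

theorem head?_flatMap_ports (l : List (Passage ι)) :
    (l.flatMap ports).head? = l.head?.map entry := by
  cases l <;> simp [head?_ports]

theorem getLast?_flatMap_ports (l : List (Passage ι)) :
    (l.flatMap ports).getLast? = l.getLast?.map exit := by
  obtain rfl | ⟨l, p, rfl⟩ := l.eq_nil_or_concat <;> simp [getLast?_ports]

theorem nodup_flatMap_ports {l : List (Passage ι)} (hl : (l.map edge).Nodup) :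
    (l.flatMap ports).Nodup := by
  refine List.nodup_flatMap.2 ⟨fun p _ => p.nodup_ports, (List.pairwise_map.1 hl).imp ?_⟩
  intro p q hpq v hp hq
  exact hpq ((fst_eq_of_mem_ports hp).symm.trans (fst_eq_of_mem_ports hq))

theorem IsCircuit.exists_isCycle (hH : ∀ i, H.Adj (i, false) (i, true)) {l : List (Passage ι)}
    (hl : IsCircuit H l) (hw : 3 ≤ totalWeight l) :
    ∃ (v : ι × Bool) (C : H.Walk v v), C.IsCycle ∧ C.length = totalWeight l := by
  have hlen : (l.flatMap ports).length = totalWeight l := by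
    simp [totalWeight, List.length_flatMap, length_ports]
  obtain ⟨hchain, hclose⟩ := cycle_chain_coe_iff.1 hl.chain
  rw [← hlen] at hw ⊢
  refine exists_isCycle_of_chain (cycle_chain_coe_iff.2 ⟨?_, ?_⟩) (nodup_flatMap_ports hl.nodup) hw
  · rw [List.flatMap_def, List.isChain_flatten (by simp [ports_ne_nil])]
    simp only [List.mem_map, List.isChain_map, head?_ports, getLast?_ports, Option.mem_some_iff,
      forall_eq', forall_exists_index, and_imp, forall_apply_eq_imp_iff₂]
    exact ⟨fun p _ => p.isChain_ports hH, hchain⟩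
  · simpa [Follows, head?_flatMap_ports, getLast?_flatMap_ports] using hclose

/-- The window `w` of a circuit may be replaced by `w'`, as far as `w'` avoids the edges of the rest
of the circuit: `w'` is joined up and has the same two end ports as `w`. -/
structure IsDetour (H : SimpleGraph (ι × Bool)) (w w' : List (Passage ι)) : Prop where
  chain : w'.IsChain (Follows H)
  nodup : (w'.map edge).Nodup
  head?_eq : w'.head?.map entry = w.head?.map entry
  getLast?_eq : w'.getLast?.map exit = w.getLast?.map exit

/-- The two kinds of progress in the induction on weight: `w'` has two vertices more than `w`, or as
many vertices but more passages. -/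
def Improves (w w' : List (Passage ι)) : Prop :=
  totalWeight w' = totalWeight w + 2 ∨ totalWeight w' = totalWeight w ∧ w.length < w'.length

/-- The window `w` can be improved by a detour through edges from the list `S`. -/
def Reroutable (H : SimpleGraph (ι × Bool)) (S : List ι) (w : List (Passage ι)) : Prop :=
  ∃ w', IsDetour H w w' ∧ Improves w w' ∧ w'.map edge ⊆ S

/-- Some circuit improves on `l`. -/
def Improvable (H : SimpleGraph (ι × Bool)) (l : List (Passage ι)) : Prop :=
  ∃ l', IsCircuit H l' ∧ Improves l l'

theorem totalWeight_append (l l' : List (Passage ι)) :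
    totalWeight (l ++ l') = totalWeight l + totalWeight l' := by
  simp [totalWeight]

theorem totalWeight_eq_of_perm {l l' : List (Passage ι)} (h : l.Perm l') :
    totalWeight l = totalWeight l' :=
  (h.map weight).sum_nat

theorem Improvable.of_isRotated {l l' : List (Passage ι)} (hl : Improvable H l) (h : l ~r l') :
    Improvable H l' := by
  simpa only [Improvable, Improves, totalWeight_eq_of_perm h.perm, h.perm.length_eq] using hl

theorem IsDetour.isCircuit {w w' t : List (Passage ι)} (h : IsDetour H w w')
    (hc : IsCircuit H (w ++ t)) (hw : w ≠ []) (hdisj : (w'.map edge).Disjoint (t.map edge)) :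
    IsCircuit H (w' ++ t) := by
  obtain ⟨hchain, hclose⟩ := cycle_chain_coe_iff.1 hc.chain
  rw [List.isChain_append] at hchain
  obtain ⟨a, ha⟩ := Option.ne_none_iff_exists'.1 (mt List.head?_eq_none_iff.1 hw)
  obtain ⟨b, hb⟩ := Option.ne_none_iff_exists'.1 (mt List.getLast?_eq_none_iff.1 hw)
  obtain ⟨a', ha', haa'⟩ := Option.map_eq_some_iff.1 (h.head?_eq.trans (by rw [ha]; rfl))
  obtain ⟨b', hb', hbb'⟩ := Option.map_eq_some_iff.1 (h.getLast?_eq.trans (by rw [hb]; rfl))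
  refine ⟨cycle_chain_coe_iff.2 ⟨List.isChain_append.2 ⟨h.chain, hchain.2.1, ?_⟩, ?_⟩, ?_⟩
  · simpa [Follows, hb, hb', hbb'] using hchain.2.2
  · cases hz : t.getLast? <;>
      simpa [Follows, List.head?_append, List.getLast?_append, ha, ha', hb, hb', haa', hbb', hz]
        using hclose
  · rw [List.map_append, List.nodup_append']
    have ht := hc.nodup
    rw [List.map_append, List.nodup_append'] at ht
    exact ⟨h.nodup, ht.2.1, hdisj⟩

theorem Reroutable.improvable {S : List ι} {w t : List (Passage ι)} (h : Reroutable H S w)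
    (hc : IsCircuit H (w ++ t)) (hw : w ≠ []) (hdisj : S.Disjoint (t.map edge)) :
    Improvable H (w ++ t) := by
  obtain ⟨w', hdetour, himp, hsub⟩ := h
  refine ⟨w' ++ t, hdetour.isCircuit hc hw fun _ hi => hdisj (hsub hi), ?_⟩
  unfold Improves at *
  simp only [totalWeight_append, List.length_append]
  lia

theorem Follows.reverse {p q : Passage ι} (h : Follows H p q) : Follows H q.reverse p.reverse :=
  h.symm

@[simp] theorem edge_reverse (p : Passage ι) : p.reverse.edge = p.edge := rfl

@[simp] theorem entry_reverse (p : Passage ι) : p.reverse.entry = p.exit := rfl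

@[simp] theorem exit_reverse (p : Passage ι) : p.reverse.exit = p.entry := rfl

@[simp] theorem weight_reverse (p : Passage ι) : p.reverse.weight = p.weight := by
  simp only [weight, reverse, eq_comm]

theorem totalWeight_map_reverse (w : List (Passage ι)) :
    totalWeight (w.map reverse).reverse = totalWeight w := by
  simp [totalWeight, Function.comp_def]

theorem IsDetour.reverse {w w' : List (Passage ι)} (h : IsDetour H w w') :
    IsDetour H (w.map Passage.reverse).reverse (w'.map Passage.reverse).reverse where
  chain := by
    rw [List.isChain_reverse, List.isChain_map]
    exact h.chain.imp fun _ _ => Follows.reverse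
  nodup := by
    simpa [Function.comp_def] using h.nodup
  head?_eq := by
    simpa [Function.comp_def] using h.getLast?_eq
  getLast?_eq := by
    simpa [Function.comp_def] using h.head?_eq

theorem Reroutable.reverse {S : List ι} {w : List (Passage ι)} (h : Reroutable H S w) :
    Reroutable H S (w.map Passage.reverse).reverse := by
  obtain ⟨w', hdetour, himp, hsub⟩ := h
  refine ⟨_, hdetour.reverse, ?_, ?_⟩
  · simpa [Improves, totalWeight_map_reverse] using himp
  · simpa [Function.comp_def] using hsub

/-- The passage `p` with its last port exchanged for the other one if `a` is true. -/
def shiftOut (p : Passage ι) (a : Bool) : Passage ι := ⟨p.edge, p.inn, p.out ^^ a⟩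

/-- The passage `p` with its first port exchanged for the other one if `a` is true. -/
def shiftIn (p : Passage ι) (a : Bool) : Passage ι := ⟨p.edge, p.inn ^^ a, p.out⟩

@[simp] theorem shiftOut_false (p : Passage ι) : p.shiftOut false = p := by simp [shiftOut]

@[simp] theorem shiftIn_false (p : Passage ι) : p.shiftIn false = p := by simp [shiftIn]

theorem weight_mk (e : ι) (i o : Bool) : weight ⟨e, i, o⟩ = if i = o then 1 else 2 := rfl

/-- The number of vertices which a passage gains when one of its end ports is exchanged for the
other one if `a` is true. -/
def gain (p : Passage ι) (a : Bool) : ℤ := if a then (if p.weight = 1 then 1 else -1) else 0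

theorem weight_shiftOut (p : Passage ι) (a : Bool) :
    ((p.shiftOut a).weight : ℤ) = p.weight + p.gain a := by
  obtain ⟨e, _ | _, _ | _⟩ := p <;> cases a <;> rfl

theorem weight_shiftIn (p : Passage ι) (a : Bool) :
    ((p.shiftIn a).weight : ℤ) = p.weight + p.gain a := by
  obtain ⟨e, _ | _, _ | _⟩ := p <;> cases a <;> rfl

/-- A window which traverses the edge `d` from the port `q` to the port `!q`, and which cannot be
improved by a detour through `d` and the two spare edges `f` and `g`. -/
structure IsStuck (H : SimpleGraph (ι × Bool)) (X : Passage ι) (d : ι) (q : Bool) (Y : Passage ι)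
    (f g : ι) : Prop where
  nodup : [X.edge, Y.edge, d, f, g].Nodup
  left : H.Adj X.exit (d, q)
  right : H.Adj (d, !q) Y.entry
  not_reroutable : ¬ Reroutable H [X.edge, Y.edge, d, f, g] [X, ⟨d, q, !q⟩, Y]

/-- The edges from the spare edge `f` to the three edges of a window: `c` selects the port of the
middle edge `d` which is joined to the port `t` of `f`, while `a` and `b` select the ports of the
outer edges. The ports of `f` at the far ends of `left` and `right` are determined by the failure of
detours. -/
structure Attached (H : SimpleGraph (ι × Bool)) (X : Passage ι) (d : ι) (q : Bool) (Y : Passage ι)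
    (f : ι) (c t a b : Bool) : Prop where
  mid : H.Adj (d, q ^^ c) (f, t)
  left : H.Adj (X.edge, X.out ^^ a) (f, t ^^ a ^^ c)
  right : H.Adj (Y.edge, Y.inn ^^ b) (f, t ^^ b ^^ !c)

variable {X Y : Passage ι} {d f g : ι} {q c t a b t' a' b' : Bool}

theorem Attached.reverse (h : Attached H X d q Y f c t a b) :
    Attached H Y.reverse d (!q) X.reverse f (!c) t b a where
  mid := by simpa using h.mid
  left := h.right
  right := by simpa [Passage.reverse] using h.left

namespace IsStuck

theorem reverse (h : IsStuck H X d q Y f g) : IsStuck H Y.reverse d (!q) X.reverse f g where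
  nodup := ((List.Perm.swap ..).nodup_iff).1 h.nodup
  left := h.right.symm
  right := by simpa using h.left.symm
  not_reroutable hr := by
    obtain ⟨w, hd, hi, hs⟩ := hr.reverse
    exact h.not_reroutable ⟨w, by simpa [Passage.reverse] using hd,
      by simpa [Passage.reverse] using hi, List.Subset.trans hs (List.Perm.swap ..).subset⟩

theorem swap (h : IsStuck H X d q Y f g) : IsStuck H X d q Y g f where
  nodup := by
    have := h.nodup
    grind
  left := h.left
  right := h.right
  not_reroutable hr := by
    obtain ⟨w, hd, hi, hs⟩ := hr
    exact h.not_reroutable ⟨w, hd, hi, List.Subset.trans hs (by simp)⟩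

theorem not_improves (h : IsStuck H X d q Y f g) (a b : Bool) {mid : List (Passage ι)}
    (hnodup : (mid.map edge).Nodup) (hsub : mid.map edge ⊆ [d, f, g])
    (hchain : (X.shiftOut a :: (mid ++ [Y.shiftIn b])).IsChain (Follows H)) :
    X.gain a + totalWeight mid + Y.gain b ≠ 4 ∧
      (2 ≤ mid.length → X.gain a + totalWeight mid + Y.gain b ≠ 2) := by
  suffices himp : ¬ Improves [X, ⟨d, q, !q⟩, Y] (X.shiftOut a :: (mid ++ [Y.shiftIn b])) by
    have hX := X.weight_shiftOut a
    have hY := Y.weight_shiftIn b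
    rw [Improves] at himp
    simp only [totalWeight, List.map_cons, List.map_append, List.map_nil, List.sum_cons,
      List.sum_append, List.sum_nil, List.length_cons, List.length_append, List.length_nil,
      show Passage.weight ⟨d, q, !q⟩ = 2 by simp [weight]] at himp ⊢
    lia
  intro himp
  have hperm : ((X.shiftOut a :: (mid ++ [Y.shiftIn b])).map edge).Perm
      (X.edge :: Y.edge :: mid.map edge) := by
    simp [shiftOut, shiftIn]
  have hnd := h.nodup
  refine h.not_reroutable ⟨_, ⟨hchain, hperm.nodup_iff.2 ?_, rfl, ?_⟩, himp,
    List.Subset.trans hperm.subset ?_⟩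
  · have hX : X.edge ∉ mid.map edge := fun hX => by have := hsub hX; grind
    have hY : Y.edge ∉ mid.map edge := fun hY => by have := hsub hY; grind
    grind
  · rw [← List.cons_append, List.getLast?_concat]
    rfl
  · grind

theorem exists_left (h : IsStuck H X d q Y f g) (hmid : H.Adj (d, q ^^ c) (f, t))
    (hlink : IsLinked H) :
    ∃ a, H.Adj (X.edge, X.out ^^ a) (f, t ^^ a ^^ c) := by
  have hnd := h.nodup
  obtain ⟨u, v, huv⟩ := hlink (show X.edge ≠ f by grind)
  obtain ⟨a, rfl⟩ : ∃ a, u = (X.out ^^ a) := ⟨X.out ^^ u, by simp⟩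
  refine ⟨a, ?_⟩
  by_contra hv
  obtain rfl : v = !(t ^^ a ^^ c) := Bool.eq_not.2 fun hv' => hv (hv' ▸ huv)
  have hdetour := h.not_improves a false (mid := [⟨f, !(t ^^ a ^^ c), t⟩, ⟨d, q ^^ c, !q⟩])
    (by grind) (by grind)
    (.cons_cons huv (.cons_cons hmid.symm (.cons_cons
      (by simpa [Follows, exit, entry] using h.right) (.singleton _))))
  by_cases hX : X.weight = 1 <;> cases a <;> cases c <;>
    simp [totalWeight, weight_mk, gain, hX] at hdetour

theorem exists_attached (h : IsStuck H X d q Y f g) (hlink : IsLinked H) :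
    ∃ c t a b, Attached H X d q Y f c t a b := by
  have hnd := h.nodup
  obtain ⟨u, t, hmid⟩ := hlink (show d ≠ f by grind)
  obtain ⟨c, rfl⟩ : ∃ c, u = (q ^^ c) := ⟨q ^^ u, by simp⟩
  obtain ⟨a, ha⟩ := h.exists_left hmid hlink
  obtain ⟨b, hb⟩ := h.reverse.exists_left (c := !c) (by simpa using hmid) hlink
  exact ⟨c, t, a, b, hmid, ha, hb⟩

theorem and_shifts_eq_false (h : IsStuck H X d q Y f g) (hf : Attached H X d q Y f c t a b)
    (hX : X.weight = 1) (hY : Y.weight = 1) : (a && b) = false := by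
  have hdetour := h.not_improves a b (mid := [⟨f, t ^^ a ^^ c, t ^^ b ^^ !c⟩])
    (by grind) (by grind) (.cons_cons hf.left (.cons_cons hf.right.symm (.singleton _)))
  cases a <;> cases b <;> simp [totalWeight, weight_mk, gain, hX, hY] at hdetour ⊢

theorem shifted_of_attached_same (h : IsStuck H X d q Y f g)
    (hf : Attached H X d q Y f false t a b) (hg : Attached H X d q Y g false t' a' b') :
    a = true ∧ X.weight = 1 ∧ (Y.weight = 1 ∨ b' = false) := by
  have hnd := h.nodup
  have hdetour := h.not_improves a b' (mid := [⟨f, t ^^ a, t⟩, ⟨d, q, q⟩, ⟨g, t', !(t' ^^ b')⟩])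
    (by grind) (by grind)
    (by simpa [Follows, entry, exit, shiftOut, shiftIn] using
      And.intro hf.left (And.intro hf.mid.symm (And.intro hg.mid hg.right.symm)))
  by_cases hX : X.weight = 1 <;> by_cases hY : Y.weight = 1 <;> cases a <;> cases b' <;>
    simp [totalWeight, weight_mk, gain, hX, hY] at hdetour ⊢

theorem shift_right_eq_false (h : IsStuck H X d q Y f g)
    (hf : Attached H X d q Y f false t a b) (hg : Attached H X d q Y g false t' a' b') :
    b' = false := by
  obtain ⟨-, hX, hY | hb'⟩ := h.shifted_of_attached_same hf hg
  · obtain ⟨rfl, -⟩ := h.swap.shifted_of_attached_same hg hf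
    simpa using h.swap.and_shifts_eq_false hg hX hY
  · exact hb'

theorem not_attached_same (h : IsStuck H X d q Y f g) (hlink : IsLinked H)
    (hf : Attached H X d q Y f false t a b) (hg : Attached H X d q Y g false t' a' b') :
    False := by
  have hnd := h.nodup
  obtain ⟨u, v, huv⟩ := hlink (show f ≠ g by grind)
  wlog hij : v = (!t') → u = (!t) generalizing f g t t' a a' b b' u v
  · exact this h.swap hg hf h.swap.nodup v u huv.symm (by tauto)
  obtain ⟨rfl, hX, -⟩ := h.shifted_of_attached_same hf hg
  obtain rfl := h.shift_right_eq_false hf hg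
  rcases Bool.eq_or_eq_not v t' with rfl | rfl
  · rcases Bool.eq_or_eq_not u t with rfl | rfl
    · have hdetour := h.not_improves false false
        (mid := [⟨d, q, q⟩, ⟨f, u, u⟩, ⟨g, v, !v⟩]) (by grind) (by grind)
        (by simpa [Follows, entry, exit] using
          And.intro h.left (And.intro hf.mid (And.intro huv hg.right.symm)))
      simp [totalWeight, weight_mk, gain] at hdetour
    · have hdetour := h.not_improves true false (mid := [⟨f, !t, !t⟩, ⟨g, v, !v⟩])
        (by grind) (by grind)
        (by simpa [Follows, entry, exit, shiftOut] using
          And.intro hf.left (And.intro huv hg.right.symm))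
      simp [totalWeight, weight_mk, gain, hX] at hdetour
  · obtain rfl := hij rfl
    have hdetour := h.not_improves false false
      (mid := [⟨d, q, q⟩, ⟨f, t, !t⟩, ⟨g, !t', !t'⟩]) (by grind) (by grind)
      (by simpa [Follows, entry, exit] using
        And.intro h.left (And.intro hf.mid (And.intro huv hg.right.symm)))
    simp [totalWeight, weight_mk, gain] at hdetour

theorem shifted_of_attached_opposite (h : IsStuck H X d q Y f g)
    (hf : Attached H X d q Y f false t a b) (hg : Attached H X d q Y g true t' a' b') :
    a = true ∧ X.weight = 1 ∨ b' = true ∧ Y.weight = 1 := by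
  have hnd := h.nodup
  have hdetour := h.not_improves a b' (mid := [⟨f, t ^^ a, t⟩, ⟨d, q, !q⟩, ⟨g, t', t' ^^ b'⟩])
    (by grind) (by grind)
    (by simpa [Follows, entry, exit, shiftOut, shiftIn] using
      And.intro hf.left (And.intro hf.mid.symm (And.intro hg.mid hg.right.symm)))
  by_cases hX : X.weight = 1 <;> by_cases hY : Y.weight = 1 <;> cases a <;> cases b' <;>
    simp [totalWeight, weight_mk, gain, hX, hY] at hdetour ⊢

theorem not_adj_of_attached_opposite (h : IsStuck H X d q Y f g) (hX : X.weight = 1)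
    (hf : Attached H X d q Y f false t true b) (hg : Attached H X d q Y g true t' a' b') :
    ¬ H.Adj (f, t) (g, t') := by
  intro hfg
  have hnd := h.nodup
  by_cases hb' : b' = true ∧ Y.weight = 1
  · obtain ⟨rfl, hY⟩ := hb'
    obtain rfl : a' = false := by simpa using h.swap.and_shifts_eq_false hg hX hY
    obtain rfl : b = false := by simpa using h.and_shifts_eq_false hf hX hY
    have hdetour := h.not_improves false false (mid := [⟨g, !t', t'⟩, ⟨f, t, !t⟩])
      (by grind) (by grind)
      (by simpa [Follows, entry, exit] using
        And.intro hg.left (And.intro hfg.symm hf.right.symm))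
    simp [totalWeight, weight_mk, gain] at hdetour
  · have hdetour := h.not_improves true b' (mid := [⟨f, !t, t⟩, ⟨g, t', t' ^^ b'⟩])
      (by grind) (by grind)
      (by simpa [Follows, entry, exit, shiftOut, shiftIn] using
        And.intro hf.left (And.intro hfg hg.right.symm))
    by_cases hY : Y.weight = 1 <;> cases b' <;>
      simp [totalWeight, weight_mk, gain, hX, hY] at hdetour hb'

theorem not_attached_opposite_of_shifted (h : IsStuck H X d q Y f g) (hX : X.weight = 1)
    (hlink : IsLinked H)
    (hf : Attached H X d q Y f false t true b) (hg : Attached H X d q Y g true t' a' b') :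
    False := by
  have hnd := h.nodup
  obtain ⟨u, v, huv⟩ := hlink (show f ≠ g by grind)
  rcases Bool.eq_or_eq_not v t' with rfl | rfl
  · rcases Bool.eq_or_eq_not u t with rfl | rfl
    · exact h.not_adj_of_attached_opposite hX hf hg huv
    · have hdetour := h.not_improves true false (mid := [⟨f, !t, !t⟩, ⟨g, v, v⟩, ⟨d, !q, !q⟩])
        (by grind) (by grind)
        (by simpa [Follows, entry, exit, shiftOut] using
          And.intro hf.left (And.intro huv (And.intro hg.mid.symm h.right)))
      simp [totalWeight, weight_mk, gain, hX] at hdetour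
  · rcases Bool.eq_or_eq_not u t with rfl | rfl
    · have hdetour := h.not_improves false b' (mid := [⟨d, q, q⟩, ⟨f, u, u⟩, ⟨g, !t', t' ^^ b'⟩])
        (by grind) (by grind)
        (by simpa [Follows, entry, exit, shiftIn] using
          And.intro h.left (And.intro hf.mid (And.intro huv hg.right.symm)))
      by_cases hY : Y.weight = 1 <;> cases b' <;>
        simp [totalWeight, weight_mk, gain, hY] at hdetour
    · have hdetour := h.not_improves true b' (mid := [⟨f, !t, !t⟩, ⟨g, !t', t' ^^ b'⟩])
        (by grind) (by grind)
        (by simpa [Follows, entry, exit, shiftOut, shiftIn] using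
          And.intro hf.left (And.intro huv hg.right.symm))
      by_cases hY : Y.weight = 1 <;> cases b' <;>
        simp [totalWeight, weight_mk, gain, hX, hY] at hdetour

theorem not_attached_opposite (h : IsStuck H X d q Y f g) (hlink : IsLinked H)
    (hf : Attached H X d q Y f false t a b) (hg : Attached H X d q Y g true t' a' b') :
    False := by
  obtain ⟨rfl, hX⟩ | ⟨rfl, hY⟩ := h.shifted_of_attached_opposite hf hg
  · exact h.not_attached_opposite_of_shifted hX hlink hf hg
  · exact h.reverse.swap.not_attached_opposite_of_shifted (by simpa using hY) hlink hg.reverse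
      hf.reverse

theorem false (h : IsStuck H X d q Y f g) (hlink : IsLinked H) : False := by
  obtain ⟨c, t, a, b, hf⟩ := h.exists_attached hlink
  obtain ⟨c', t', a', b', hg⟩ := h.swap.exists_attached hlink
  cases c <;> cases c'
  · exact h.not_attached_same hlink hf hg
  · exact h.not_attached_opposite hlink hf hg
  · exact h.swap.not_attached_opposite hlink hg hf
  · exact h.reverse.not_attached_same hlink hf.reverse hg.reverse

end IsStuck

/-- A circuit which visits only one end of each of its edges and which admits no improvement. -/
structure IsRigid (H : SimpleGraph (ι × Bool)) (l : List (Passage ι)) : Prop where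
  isCircuit : IsCircuit H l
  single : ∀ p ∈ l, p.inn = p.out
  not_improvable : ¬ Improvable H l

/-- A choice, for each passage `p` of the circuit `l`, of an edge of `H` from the edge of `p` to the
spare edge `f`: it ends at the port `s p` of `f`, and starts at the port of `p` unless `a p` is
true. -/
structure IsHub (H : SimpleGraph (ι × Bool)) (l : List (Passage ι)) (f : ι)
    (a s : Passage ι → Bool) : Prop where
  notMem : f ∉ l.map edge
  adj : ∀ p ∈ l, H.Adj (p.edge, p.out ^^ a p) (f, s p)

variable {l l' : List (Passage ι)} {f g : ι} {a s a' s' : Passage ι → Bool}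

theorem IsHub.of_perm (hf : IsHub H l f a s) (h : l.Perm l') : IsHub H l' f a s where
  notMem := mt (h.map edge).mem_iff.2 hf.notMem
  adj p hp := hf.adj p (h.mem_iff.2 hp)

theorem exists_isHub (hlink : IsLinked H)
    (hf : f ∉ l.map edge) : ∃ a s, IsHub H l f a s := by
  have hspoke (p : Passage ι) : ∃ b r, p ∈ l → H.Adj (p.edge, p.out ^^ b) (f, r) := by
    by_cases hp : p ∈ l
    · obtain ⟨u, r, hur⟩ := hlink (ne_of_mem_of_not_mem (List.mem_map_of_mem hp) hf)
      exact ⟨p.out ^^ u, r, fun _ => by simpa using hur⟩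
    · exact ⟨false, false, fun h => absurd h hp⟩
  choose a s has using hspoke
  exact ⟨a, s, hf, has⟩

namespace IsRigid

theorem of_isRotated (hl : IsRigid H l) (h : l ~r l') : IsRigid H l' where
  isCircuit := hl.isCircuit.of_isRotated h
  single p hp := hl.single p (h.perm.mem_iff.2 hp)
  not_improvable := fun h' => hl.not_improvable (h'.of_isRotated h.symm)

theorem bypass_ne {u v : Passage ι} {mid t : List (Passage ι)}
    (hl : IsRigid H (u :: (mid ++ [v]) ++ t)) (hf : IsHub H (u :: (mid ++ [v]) ++ t) f a s) :
    (a u).toNat + (a v).toNat + (s u ^^ s v).toNat ≠ totalWeight mid + 1 := by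
  intro h
  have hu : u.inn = u.out := hl.single u (by simp)
  have hv : v.inn = v.out := hl.single v (by simp)
  have hvf : H.Adj (f, s v) (v.shiftIn (a v)).entry := by
    simpa [entry, shiftIn, hv] using (hf.adj v (by simp)).symm
  have hnd := hl.isCircuit.nodup
  have hfmem := hf.notMem
  simp only [List.map_append, List.map_cons, List.map_nil] at hnd hfmem
  refine hl.not_improvable (Reroutable.improvable (S := [u.edge, f, v.edge])
    ⟨[u.shiftOut (a u), ⟨f, s u, s v⟩, v.shiftIn (a v)], ⟨?_, ?_, rfl, ?_⟩, .inl ?_,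
      List.Subset.refl _⟩ hl.isCircuit (by simp) (by grind [List.Disjoint]))
  · exact .cons_cons (hf.adj u (by simp)) (.cons_cons hvf (.singleton _))
  · grind [shiftOut, shiftIn]
  · rw [← List.cons_append, List.getLast?_concat]
    rfl
  · revert h
    cases a u <;> cases a v <;> cases s u <;> cases s v <;>
      simp +arith [totalWeight, weight, shiftOut, shiftIn, hu, hv]

theorem shift_of_shift {u v : Passage ι} {t : List (Passage ι)} (hl : IsRigid H (u :: v :: t))
    (hf : IsHub H (u :: v :: t) f a s) (ht : t ≠ []) (ha : a u = true) : a v = true := by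
  obtain ⟨w, t, rfl⟩ := List.exists_cons_of_ne_nil ht
  have hrot := List.isRotated_append (l := [u]) (l' := v :: w :: t)
  have huv := hl.bypass_ne (mid := []) hf
  have huw := hl.bypass_ne (mid := [v]) hf
  have hvw := (hl.of_isRotated hrot).bypass_ne (mid := []) (hf.of_perm hrot.perm)
  have hv : v.weight = 1 := if_pos (hl.single v (by simp))
  simp only [totalWeight, List.map_nil, List.map_cons, List.sum_nil, List.sum_cons, hv]
    at huv huw hvw
  revert huv huw hvw
  rw [ha]
  cases a v <;> cases a w <;> cases s u <;> cases s v <;> cases s w <;> simp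

theorem eq_not_of_shift {u₁ u₂ u₃ u₄ : Passage ι} {t : List (Passage ι)}
    (hl : IsRigid H (u₁ :: u₂ :: u₃ :: u₄ :: t)) (hf : IsHub H (u₁ :: u₂ :: u₃ :: u₄ :: t) f a s)
    (ha₁ : a u₁ = true) : s u₂ = (!s u₁) ∧ s u₃ = (!s u₁) := by
  have hrot₂ := List.isRotated_append (l := [u₁]) (l' := u₂ :: u₃ :: u₄ :: t)
  have hrot₃ := List.isRotated_append (l := [u₁, u₂]) (l' := u₃ :: u₄ :: t)
  have hl₂ := hl.of_isRotated hrot₂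
  have hf₂ := hf.of_perm hrot₂.perm
  have ha₂ := hl.shift_of_shift hf (by simp) ha₁
  have ha₃ := hl₂.shift_of_shift hf₂ (by simp) ha₂
  have ha₄ := (hl.of_isRotated hrot₃).shift_of_shift (hf.of_perm hrot₃.perm) (by simp) ha₃
  have h₁₃ := hl.bypass_ne (mid := [u₂]) hf
  have h₁₄ := hl.bypass_ne (mid := [u₂, u₃]) hf
  have h₂₄ := hl₂.bypass_ne (mid := [u₃]) hf₂
  have hw₂ : u₂.weight = 1 := if_pos (hl.single u₂ (by simp))
  have hw₃ : u₃.weight = 1 := if_pos (hl.single u₃ (by simp))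
  simp only [totalWeight, List.map_nil, List.map_cons, List.sum_nil, List.sum_cons, hw₂, hw₃,
    ha₁, ha₂, ha₃, ha₄] at h₁₃ h₁₄ h₂₄
  revert h₁₃ h₁₄ h₂₄
  cases s u₁ <;> cases s u₂ <;> cases s u₃ <;> cases s u₄ <;> simp

theorem shift_eq_false (hl : IsRigid H l) (hf : IsHub H l f a s) (hlen : 4 ≤ l.length)
    {p : Passage ι} (hp : p ∈ l) : a p = false := by
  obtain ⟨l₁, l₂, rfl⟩ := List.mem_iff_append.1 hp
  have hrot := List.isRotated_append (l := l₁) (l' := p :: l₂)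
  obtain ⟨u₂, u₃, u₄, t, ht⟩ := exists_eq_cons_cons_cons (show 3 ≤ (l₂ ++ l₁).length by grind)
  obtain ⟨v, t', ht'⟩ : ∃ v t', t ++ [p] = v :: t' :=
    List.exists_cons_of_ne_nil (by simp)
  rw [List.cons_append, ht] at hrot
  have hl₁ := hl.of_isRotated hrot
  have hf₁ := hf.of_perm hrot.perm
  have hrot₂ := List.isRotated_append (l := [p]) (l' := u₂ :: u₃ :: u₄ :: t)
  rw [List.singleton_append, List.cons_append, List.cons_append, List.cons_append, ht'] at hrot₂
  by_contra ha
  rw [Bool.not_eq_false] at ha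
  have ha₂ := hl₁.shift_of_shift hf₁ (by simp) ha
  obtain ⟨hs₂, hs₃⟩ := hl₁.eq_not_of_shift hf₁ ha
  obtain ⟨hs₃', -⟩ := (hl₁.of_isRotated hrot₂).eq_not_of_shift (hf₁.of_perm hrot₂.perm) ha₂
  grind

theorem false (hl : IsRigid H l) (hlen : 4 ≤ l.length) (hlink : IsLinked H)
    (hf : f ∉ l.map edge) (hg : g ∉ l.map edge) (hfg : f ≠ g) : False := by
  obtain ⟨a, s, hf⟩ := exists_isHub hlink hf
  obtain ⟨a', s', hg⟩ := exists_isHub hlink hg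
  have ha (p) (hp : p ∈ l) := hl.shift_eq_false hf hlen hp
  have ha' (p) (hp : p ∈ l) := hl.shift_eq_false hg hlen hp
  obtain ⟨u, v, w, t, rfl⟩ := exists_eq_cons_cons_cons (show 3 ≤ l.length by lia)
  have hrot := List.isRotated_append (l := [u]) (l' := v :: w :: t)
  have hs : s u = s v := by
    have := hl.bypass_ne (mid := []) hf
    simpa [totalWeight, ha] using this
  have hs' : s' v = s' w := by
    have := (hl.of_isRotated hrot).bypass_ne (mid := []) (hg.of_perm hrot.perm)
    simpa [totalWeight, ha'] using this
  have hnd := hl.isCircuit.nodup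
  have hfmem := hf.notMem
  have hgmem := hg.notMem
  simp only [List.map_cons] at hnd hfmem hgmem
  refine hl.not_improvable (Reroutable.improvable (w := [u, v, w])
    (S := [u.edge, f, v.edge, g, w.edge])
    ⟨[u, ⟨f, s u, s u⟩, v, ⟨g, s' v, s' v⟩, w], ⟨?_, by grind, rfl, rfl⟩, .inl ?_,
      List.Subset.refl _⟩ hl.isCircuit (by simp) (by grind [List.Disjoint]))
  · have hfu := hf.adj u
    have hfv := hf.adj v
    have hgv := hg.adj v
    have hgw := hg.adj w
    have hv := hl.single v
    have hw := hl.single w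
    simp_all [Follows, entry, exit, SimpleGraph.adj_comm]
  · simp +arith [totalWeight, weight_mk]

end IsRigid

theorem length_le_totalWeight (l : List (Passage ι)) : l.length ≤ totalWeight l := by
  simpa [totalWeight] using List.length_le_sum_of_one_le (l.map weight)
    (by simpa using fun p _ => by unfold weight; split_ifs <;> lia)

theorem totalWeight_le_two_mul_length (l : List (Passage ι)) : totalWeight l ≤ 2 * l.length := by
  simpa [totalWeight, mul_comm] using List.sum_le_card_nsmul (l.map weight) 2
    (by simpa using fun p _ => by unfold weight; split_ifs <;> lia)

theorem totalWeight_eq_length (hl : ∀ p ∈ l, p.inn = p.out) : totalWeight l = l.length := by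
  have hmap : l.map weight = l.map fun _ => 1 := List.map_congr_left fun p hp => if_pos (hl p hp)
  simp [totalWeight, hmap]

namespace IsCircuit

theorem improvable_of_inn_ne_out (hc : IsCircuit H l) (hlen : 3 ≤ l.length) (hlink : IsLinked H)
    (hf : f ∉ l.map edge) (hg : g ∉ l.map edge) (hfg : f ≠ g) {D : Passage ι} (hD : D ∈ l)
    (hne : D.inn ≠ D.out) : Improvable H l := by
  obtain ⟨X, Y, t, hrot⟩ := exists_isRotated_cons_cons_cons hlen hD
  have hc' := hc.of_isRotated hrot
  obtain ⟨d, q, r⟩ := D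
  obtain rfl : r = !q := Bool.eq_not.2 hne.symm
  have hnd := hc'.nodup
  rw [(hrot.perm.map edge).mem_iff] at hf hg
  simp only [List.map_cons] at hnd hf hg
  have hchain := (cycle_chain_coe_iff.1 hc'.chain).1
  simp only [List.isChain_cons_cons] at hchain
  by_contra hl
  refine IsStuck.false (H := H) (X := X) (d := d) (q := q) (Y := Y) (f := f) (g := g)
    ⟨by grind, hchain.1, hchain.2.1, fun hr => hl ?_⟩ hlink
  exact (hr.improvable (t := t) hc' (by simp) (by grind [List.Disjoint])).of_isRotated hrot.symm

theorem improvable (hc : IsCircuit H l) (hlen : 3 ≤ l.length) (hw : 4 ≤ totalWeight l)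
    (hlink : IsLinked H)
    (hf : f ∉ l.map edge) (hg : g ∉ l.map edge) (hfg : f ≠ g) : Improvable H l := by
  by_cases hsingle : ∀ p ∈ l, p.inn = p.out
  · by_contra hl
    rw [totalWeight_eq_length hsingle] at hw
    exact IsRigid.false ⟨hc, hsingle, hl⟩ hw hlink hf hg hfg
  · push Not at hsingle
    obtain ⟨D, hD, hne⟩ := hsingle
    exact hc.improvable_of_inn_ne_out hlen hlink hf hg hfg hD hne

theorem exists_totalWeight_add_two [Fintype ι] (hlink : IsLinked H)
    (hc : IsCircuit H l) (hlen : 3 ≤ l.length) (hw : 4 ≤ totalWeight l)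
    (hcard : totalWeight l + 2 ≤ Fintype.card ι) :
    ∃ l', IsCircuit H l' ∧ 3 ≤ l'.length ∧ totalWeight l' = totalWeight l + 2 := by
  classical
  induction hn : totalWeight l - l.length using Nat.strong_induction_on generalizing l with
  | _ n ih =>
    obtain ⟨f, hf, g, hg, hfg⟩ :
        ∃ f ∈ (l.map edge).toFinsetᶜ, ∃ g ∈ (l.map edge).toFinsetᶜ, f ≠ g := by
      have hle := length_le_totalWeight l
      have := (l.map edge).toFinset_card_le
      rw [List.length_map] at this
      rw [← Finset.one_lt_card, Finset.card_compl]
      lia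
    rw [Finset.mem_compl, List.mem_toFinset] at hf hg
    obtain ⟨l', hc', hadd | ⟨heq, hlt⟩⟩ := hc.improvable hlen hw hlink hf hg hfg
    · have := totalWeight_le_two_mul_length l'
      exact ⟨l', hc', by lia, hadd⟩
    · have := length_le_totalWeight l'
      rw [← heq] at hw hcard hn ⊢
      exact ih _ (by lia) hc' (by lia) hw hcard rfl

end IsCircuit

theorem isTight_of_not_exists_isCircuit
    (hport : Pairwise fun i j => H.Adj (i, port i j) (j, port j i))
    (hno : ∀ l, IsCircuit H l → 3 ≤ l.length → totalWeight l ≠ 4) : IsTight port where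
  triangle {i j k} hnd hi hj := by
    by_contra hk
    refine hno [⟨i, port i k, port i j⟩, ⟨j, port j i, port j k⟩, ⟨k, port k j, port k i⟩]
      ⟨?_, hnd⟩ (by simp) (by simp [totalWeight, weight_mk, hi, hj, Ne.symm hk])
    exact .cons_cons (hport (by grind)) (.cons_cons (hport (by grind)) (.cons_cons
      (hport (by grind)) (.singleton _)))
  quad {i j k l} hnd hi hj hk hl := by
    refine hno [⟨i, port i l, port i j⟩, ⟨j, port j i, port j k⟩, ⟨k, port k j, port k l⟩,
      ⟨l, port l k, port l i⟩]
      ⟨?_, hnd⟩ (by simp) (by simp [totalWeight, weight_mk, hi, hj, hk, hl])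
    exact .cons_cons (hport (by grind)) (.cons_cons (hport (by grind)) (.cons_cons
      (hport (by grind)) (.cons_cons (hport (by grind)) (.singleton _))))

theorem exists_isCircuit_totalWeight_eq_four [Fintype ι]
    (hlink : IsLinked H) (hcard : 6 ≤ Fintype.card ι) :
    ∃ l, IsCircuit H l ∧ 3 ≤ l.length ∧ totalWeight l = 4 := by
  obtain ⟨port, hport⟩ := exists_port hlink
  by_contra! hno
  have := (isTight_of_not_exists_isCircuit hport hno).card_le
  lia

theorem exists_isCircuit_totalWeight_eq [Fintype ι]
    (hlink : IsLinked H) (hcard : 6 ≤ Fintype.card ι) {n : ℕ}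
    (hn : 2 ≤ n) (hnc : 2 * n ≤ Fintype.card ι) :
    ∃ l, IsCircuit H l ∧ 3 ≤ l.length ∧ totalWeight l = 2 * n := by
  induction n, hn using Nat.le_induction with
  | base => exact exists_isCircuit_totalWeight_eq_four hlink hcard
  | succ n hn ih =>
    obtain ⟨l, hc, hlen, hw⟩ := ih (by lia)
    have := hc.exists_totalWeight_add_two hlink hlen (by lia) (by lia)
    rwa [hw] at this

end Passage

theorem exists_isCycle_of_isLinked [Fintype ι] {H : SimpleGraph (ι × Bool)}
    (hH : ∀ i, H.Adj (i, false) (i, true)) (hlink : IsLinked H) {m : ℕ} (hm : 3 ≤ m)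
    (hcard : 2 * m ≤ Fintype.card ι) :
    ∃ (v : ι × Bool) (C : H.Walk v v), C.IsCycle ∧ C.length = 2 * m := by
  obtain ⟨l, hc, -, hw⟩ := Passage.exists_isCircuit_totalWeight_eq hlink (by lia) (by lia) hcard
  rw [← hw]
  exact hc.exists_isCycle hH (by lia)

theorem IsMatchingSet.exists_ends {V : Type*} {G : SimpleGraph V} {M : Set (Sym2 V)}
    (hM : IsMatchingSet G M) :
    ∃ φ : M × Bool → V, Function.Injective φ ∧ ∀ e : M, s(φ (e, false), φ (e, true)) = e := by
  have hmk : ∀ e : Sym2 V, ∃ a b, s(a, b) = e := Sym2.ind fun a b => ⟨a, b, rfl⟩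
  choose a b hab using hmk
  let φ (p : M × Bool) : V := if p.2 then b p.1 else a p.1
  have hφ (e : M) : s(φ (e, false), φ (e, true)) = e := hab e
  have hmem (e : M) (i : Bool) : φ (e, i) ∈ (e : Sym2 V) := by
    rw [← hφ e]
    cases i
    · exact Sym2.mem_mk_left ..
    · exact Sym2.mem_mk_right ..
  refine ⟨φ, ?_, hφ⟩
  rintro ⟨e, i⟩ ⟨f, j⟩ h
  obtain rfl | hef := eq_or_ne e f
  · have hadj : G.Adj (φ (e, false)) (φ (e, true)) := by
      rw [← SimpleGraph.mem_edgeSet, hφ]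
      exact hM.1 e.2
    cases i <;> cases j <;> first | rfl | exact absurd h hadj.ne | exact absurd h hadj.ne'
  · exact absurd (h ▸ hmem f j) (hM.2 e e.2 f f.2 (Subtype.coe_ne_coe.2 hef) _ (hmem e i))

theorem IsStrongClique.exists_adj_of_isMatchingSet {V : Type*} {G : SimpleGraph V}
    {M : Set (Sym2 V)} (hsc : IsStrongClique G M) (hM : IsMatchingSet G M) {φ : M × Bool → V}
    (hφ : ∀ e : M, s(φ (e, false), φ (e, true)) = e) {e f : M} (hef : e ≠ f) :
    ∃ u v, G.Adj (φ (e, u)) (φ (f, v)) := by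
  obtain ⟨a, b, ha, hb, hab⟩ := hsc.2 e e.2 f f.2
  have hadj : G.Adj a b := hab.resolve_left fun h =>
    hM.2 e e.2 f f.2 (Subtype.coe_ne_coe.2 hef) a ha (h ▸ hb)
  rw [← hφ e, Sym2.mem_iff] at ha
  rw [← hφ f, Sym2.mem_iff] at hb
  obtain rfl | rfl := ha <;> obtain rfl | rfl := hb <;> exact ⟨_, _, hadj⟩

theorem stmt17_general {V : Type*} (G : SimpleGraph V) (M : Finset (Sym2 V))
    (hmatch : IsMatchingSet G ↑M) (hsc : IsStrongClique G ↑M) (m : ℕ) (hm : 2 * m ≤ M.card)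
    (hm3 : 3 ≤ m) :
    ∃ (v : V) (C : G.Walk v v), C.IsCycle ∧ C.length = 2 * m := by
  obtain ⟨φ, hφ, hends⟩ := hmatch.exists_ends
  have hH (e : (M : Set (Sym2 V))) : (G.comap φ).Adj (e, false) (e, true) := by
    rw [SimpleGraph.comap_adj, ← SimpleGraph.mem_edgeSet, hends]
    exact hmatch.1 e.2
  have hlink : IsLinked (G.comap φ) := fun _ _ hef =>
    hsc.exists_adj_of_isMatchingSet hmatch hends hef
  obtain ⟨v, C, hC, hlen⟩ := exists_isCycle_of_isLinked hH hlink hm3 (by simpa using hm)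
  exact ⟨_, C.map (SimpleGraph.Hom.comap φ G), hC.map hφ, by simpa using hlen⟩

/-- Let `M` be a matching of `G` that is also a strong clique of `G`. If `|M| = 2m ≥ 6`,
then `G` contains a cycle of length `2m`. -/
theorem stmt17 {V : Type*} [Fintype V] [DecidableEq V] (G : SimpleGraph V)
    (M : Finset (Sym2 V))
    (hmatch : IsMatchingSet G ↑M) (hsc : IsStrongClique G ↑M)
    (m : ℕ) (hm : M.card = 2 * m) (hm3 : 3 ≤ m) :
    ∃ (v : V) (C : G.Walk v v), C.IsCycle ∧ C.length = 2 * m :=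
  stmt17_general G M hmatch hsc m hm.ge hm3
end

section
/- For every integer k ≥ 3, if G is a C_{2k}-free graph with Δ(G) ≥ 1, then the strong clique number of G is at most (2k−1)Δ(G) + (2k−1)². -/
/-- `G` contains no cycle of length `n`. -/
def CycleFree {V : Type*} (G : SimpleGraph V) (n : ℕ) : Prop :=
  ∀ (v : V) (c : G.Walk v v), c.IsCycle → c.length ≠ n

/-!
Let `M` be a largest matching inside the strong clique `S`. An augmenting path argument shows that
each edge of `M` has an end `b` with at most one exposed neighbour along `S`. Every edge of `S`
then meets the other end `a` of an edge of `M`, or joins two of the vertices `b`, or joins one of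
them to its exposed neighbour, so `|S| ≤ |M| Δ + |M|²`. It remains to find a cycle of length `2k`
on the ends of `2k` disjoint edges of a strong clique.

Any two of these edges `i` and `j` are linked by an edge from an end `x i j` of `i` to an end
`x j i` of `j`. A cyclic sequence of distinct matching edges (a tour) thus closes up to a cycle,
which visits one or both ends of each of them; the cost of the tour is the length of this cycle.
Four matching edges already carry a tour of cost 4 or 6. To pass from cost `c` to cost `c + 2`,
take a longest tour of cost `c` and suppose that no tour costs `c + 2`. Comparing the ways to
insert one or two outside matching edges, possibly in exchange for edges of the tour, shows that
the tour visits a single end of each of its edges if there are three outsiders, and both ends of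
some edge if there are two. Since there are at least `c + 2` matching edges, there are two
outsiders, and a third one as soon as some edge is visited at both ends, because the tour then has
fewer than `c` edges.
-/

section Cost

variable {ι : Type*} (x : ι → ι → Bool)

/-- The number of extra vertices needed to pass from end `a` to end `b` of an edge. -/
def mismatch (a b : Bool) : ℤ := if a = b then 0 else 1

theorem mismatch_comm (a b : Bool) : mismatch a b = mismatch b a := by
  simp only [mismatch, eq_comm]

theorem mismatch_eq_zero_or_one (a b : Bool) : mismatch a b = 0 ∨ mismatch a b = 1 := by
  revert a b; decide

theorem mismatch_triangle (a b c : Bool) :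
    mismatch a b + mismatch b c + mismatch a c = 0 ∨
      mismatch a b + mismatch b c + mismatch a c = 2 := by
  revert a b c; decide

/-- The number of vertices of `v` on a route that enters `v` from `u` and leaves it for `w`. Here
and below, `x i j : Bool` is the end of the matching edge `i` to which `j` is attached. -/
def turn (u v w : ι) : ℤ := 1 + mismatch (x v u) (x v w)

theorem turn_comm (u v w : ι) : turn x u v w = turn x w v u := by
  rw [turn, turn, mismatch_comm]

theorem turn_eq_one_or_two (u v w : ι) : turn x u v w = 1 ∨ turn x u v w = 2 := by
  have := mismatch_eq_zero_or_one (x v u) (x v w)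
  unfold turn; omega

/-- The number of vertices on the route through a list of matching edges, where those of the first
and the last edge are not counted. -/
def pathCost : List ι → ℤ
  | u :: v :: w :: l => turn x u v w + pathCost (v :: w :: l)
  | _ => 0

/-- The number of vertices on the closed route through a cyclic list of matching edges. -/
def tourCost (l : List ι) : ℤ := pathCost x (l ++ l.take 2)

/-- A tour: a cyclic sequence of at least three distinct matching edges. -/
def IsTour (l : List ι) : Prop := l.Nodup ∧ 3 ≤ l.length

theorem pathCost_append_cons_cons (A : List ι) (a b : ι) (B : List ι) :
    pathCost x (A ++ a :: b :: B) = pathCost x (A ++ [a, b]) + pathCost x (a :: b :: B) := by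
  induction A with
  | nil => simp [pathCost]
  | cons p A ih =>
    rcases A with _ | ⟨q, _ | ⟨r, A⟩⟩ <;>
      simp only [List.cons_append, List.nil_append, pathCost] at ih ⊢ <;> linarith

theorem pathCost_insert (A B : List ι) (a b f d e : ι) :
    pathCost x (A ++ a :: b :: f :: d :: e :: B) = pathCost x (A ++ a :: b :: d :: e :: B) +
      (turn x a b f + turn x b f d + turn x f d e - turn x a b d - turn x b d e) := by
  rw [pathCost_append_cons_cons x A a b (f :: d :: e :: B),
    pathCost_append_cons_cons x A a b (d :: e :: B)]
  simp only [pathCost]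
  ring

end Cost

section Arc

variable {ι : Type*} (x : ι → ι → Bool) (z : ℤ → ι)

/-- The `n` consecutive terms of the sequence `z` that begin with `z i`. -/
def arc (i : ℤ) : ℕ → List ι
  | 0 => []
  | n + 1 => z i :: arc (i + 1) n

theorem length_arc (i : ℤ) (n : ℕ) : (arc z i n).length = n := by
  induction n generalizing i with
  | zero => rfl
  | succ n ih => simp [arc, ih]

theorem mem_arc {i : ℤ} {n : ℕ} {a : ι} :
    a ∈ arc z i n ↔ ∃ j, i ≤ j ∧ j < i + n ∧ z j = a := by
  induction n generalizing i with
  | zero => simp only [arc, List.not_mem_nil, false_iff]; rintro ⟨j, h₁, h₂, -⟩; omega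
  | succ n ih =>
    rw [arc, List.mem_cons, ih]
    constructor
    · rintro (rfl | ⟨j, h₁, h₂, rfl⟩)
      · exact ⟨i, by omega, by omega, rfl⟩
      · exact ⟨j, by omega, by omega, rfl⟩
    · rintro ⟨j, h₁, h₂, rfl⟩
      obtain rfl | hj := eq_or_ne j i
      · exact .inl rfl
      · exact .inr ⟨j, by omega, by omega, rfl⟩

theorem arc_add (i : ℤ) (m n : ℕ) :
    arc z i (m + n) = arc z i m ++ arc z (i + m) n := by
  induction m generalizing i with
  | zero => simp [arc]
  | succ m ih =>
    rw [Nat.add_right_comm, arc, ih, arc, List.cons_append, Nat.cast_succ]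
    congr 3; ring

theorem nodup_arc {t : ℕ} (hz : ∀ i j, z i = z j ↔ i ≡ j [ZMOD t]) (i : ℤ) {n : ℕ}
    (hn : n ≤ t) : (arc z i n).Nodup := by
  induction n generalizing i with
  | zero => exact List.nodup_nil
  | succ n ih =>
    refine List.nodup_cons.2 ⟨fun hi => ?_, ih _ (by omega)⟩
    obtain ⟨j, h₁, h₂, hj⟩ := (mem_arc z).1 hi
    have := Int.le_of_dvd (by omega) ((hz _ _).1 hj.symm).dvd
    omega

/-- The number of vertices of `z i` on the route along `z`. -/
def turnAt (i : ℤ) : ℤ := turn x (z (i - 1)) (z i) (z (i + 1))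

theorem turnAt_eq_one_or_two (i : ℤ) : turnAt x z i = 1 ∨ turnAt x z i = 2 :=
  turn_eq_one_or_two x _ _ _

variable {z} in
theorem turnAt_periodic {t : ℤ} (hz : Function.Periodic z t) :
    Function.Periodic (turnAt x z) t := fun i => by
  rw [turnAt, add_sub_right_comm, add_right_comm, hz, hz, hz, turnAt]

theorem pathCost_arc (i : ℤ) (n : ℕ) :
    pathCost x (arc z i (n + 2)) = ∑ k ∈ Finset.range n, turnAt x z (i + 1 + k) := by
  induction n generalizing i with
  | zero => rfl
  | succ n ih =>
    rw [Finset.sum_range_succ']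
    have := ih (i + 1)
    simp only [arc, pathCost, turnAt] at this ⊢
    rw [this, add_comm]
    congr 1
    · refine Finset.sum_congr rfl fun k _ => ?_
      rw [Nat.cast_succ, show i + 1 + (k + 1 : ℤ) = i + 1 + 1 + k by ring]
    · simp

end Arc

section Stuck

variable {ι : Type*} {x : ι → ι → Bool} {z : ℤ → ι} {t : ℕ} {c : ℤ}

/-- The `t`-periodic sequence `z` runs around a tour of length `t` and cost `c`, no tour costs
`c + 2`, and no longer tour costs `c`. -/
structure IsStuck (x : ι → ι → Bool) (z : ℤ → ι) (t : ℕ) (c : ℤ) : Prop where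
  three_le : 3 ≤ t
  apply_eq_iff : ∀ i j, z i = z j ↔ i ≡ j [ZMOD t]
  sum_turnAt : ∀ i, ∑ k ∈ Finset.range t, turnAt x z (i + k) = c
  tourCost_ne : ∀ l, IsTour l → tourCost x l ≠ c + 2
  length_le : ∀ l, IsTour l → tourCost x l = c → l.length ≤ t

namespace IsStuck

theorem apply_add_period (h : IsStuck x z t c) (i : ℤ) : z (i + t) = z i :=
  (h.apply_eq_iff _ _).2 Int.add_modEq_right

theorem tourCost_reroute (h : IsStuck x z t c) {r s : ℕ} (ht : t = r + s + 2) (i : ℤ)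
    (M : List ι) :
    tourCost x (arc z (i + r + 1) (s + 2) ++ M) =
      c + pathCost x (z (i - 1) :: z i :: (M ++ [z (i + r + 1), z (i + r + 2)])) -
        ∑ k ∈ Finset.range (r + 2), turnAt x z (i + k) := by
  have arc_eq : arc z (i + r + 1) (s + 2) = arc z (i + r + 1) s ++ [z (i - 1), z i] := by
    have h₁ : i + r + 1 + s = i - 1 + t := by omega
    have h₂ : i - 1 + t + 1 = i + t := by ring
    rw [arc_add, h₁]
    simp only [arc, h₂, h.apply_add_period]
  have take_eq : (arc z (i + r + 1) (s + 2) ++ M).take 2 = [z (i + r + 1), z (i + r + 2)] := by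
    simp only [arc, List.cons_append, List.take_succ_cons, List.take_zero]
    congr 3; ring
  have arc_cost := pathCost_arc x z (i + r + 1) s
  have total := h.sum_turnAt i
  rw [show t = r + 2 + s by omega, Finset.sum_range_add] at total
  rw [tourCost, take_eq, arc_eq, List.append_assoc, List.append_assoc, List.cons_append,
    List.cons_append, List.nil_append, pathCost_append_cons_cons, ← arc_eq, arc_cost, ← total]
  have : ∀ k : ℕ, i + r + 1 + 1 + k = i + (r + 2 + k : ℕ) := fun k => by push_cast; ring
  simp only [this]
  ring

theorem pathCost_reroute_ne (h : IsStuck x z t c) {r s : ℕ} (ht : t = r + s + 2) (i : ℤ)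
    {M : List ι} (hM : M ≠ []) (hnd : (arc z (i + r + 1) (s + 2) ++ M).Nodup) :
    pathCost x (z (i - 1) :: z i :: (M ++ [z (i + r + 1), z (i + r + 2)])) ≠
        ∑ k ∈ Finset.range (r + 2), turnAt x z (i + k) + 2 ∧
      (r < M.length →
        pathCost x (z (i - 1) :: z i :: (M ++ [z (i + r + 1), z (i + r + 2)])) ≠
          ∑ k ∈ Finset.range (r + 2), turnAt x z (i + k)) := by
  have length_eq : (arc z (i + r + 1) (s + 2) ++ M).length = s + 2 + M.length := by
    rw [List.length_append, length_arc]
  have tour : IsTour (arc z (i + r + 1) (s + 2) ++ M) :=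
    ⟨hnd, by have := List.length_pos_iff.2 hM; omega⟩
  have cost := h.tourCost_reroute ht i M
  constructor
  · intro heq
    exact h.tourCost_ne _ tour (by rw [cost, heq]; ring)
  · intro hr heq
    have := h.length_le _ tour (by rw [cost, heq]; ring)
    omega

theorem reverse (h : IsStuck x z t c) : IsStuck x (fun i => z (-i)) t c where
  three_le := h.three_le
  apply_eq_iff i j := (h.apply_eq_iff _ _).trans Int.neg_modEq_neg
  sum_turnAt i := by
    rw [← h.sum_turnAt (1 - i - t), ← Finset.sum_range_reflect]
    refine Finset.sum_congr rfl fun k hk => ?_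
    have := Finset.mem_range.1 hk
    rw [turnAt, turnAt, turn_comm, Nat.sub_sub, Nat.cast_sub (by omega)]
    push_cast
    congr 2 <;> ring
  tourCost_ne := h.tourCost_ne
  length_le := h.length_le

end IsStuck
end Stuck

section Detour

variable {ι : Type*} (x : ι → ι → Bool) (z : ℤ → ι)

/-- The number of vertices of `z i` that are gained when the route along `z` is left after `z i`
for `f`. -/
def exitGain (f : ι) (i : ℤ) : ℤ := turn x (z (i - 1)) (z i) f - turnAt x z i

/-- The number of vertices of `z i` that are gained when the route along `z` is entered at `z i`
from `f`. -/
def entryGain (f : ι) (i : ℤ) : ℤ := turn x f (z i) (z (i + 1)) - turnAt x z i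

/-- The cost of leaving the route along `z` after `z i` and returning to it at `z j` by way
of `f`. -/
def detour (f : ι) (i j : ℤ) : ℤ := turn x (z i) f (z j) + exitGain x z f i + entryGain x z f j

-- Both kinds of positions allow two kinds of outsiders `f`, according to the end of `z i` to
-- which `f` is attached.
theorem exitGain_entryGain_cases (f : ι) (i : ℤ) :
    turnAt x z i = 1 ∧ (exitGain x z f i = 0 ∧ entryGain x z f i = 0 ∨
        exitGain x z f i = 1 ∧ entryGain x z f i = 1) ∨
      turnAt x z i = 2 ∧ (exitGain x z f i = -1 ∧ entryGain x z f i = 0 ∨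
        exitGain x z f i = 0 ∧ entryGain x z f i = -1) := by
  unfold exitGain entryGain turnAt turn
  generalize x (z i) (z (i - 1)) = a, x (z i) (z (i + 1)) = b, x (z i) f = p
  revert a b p
  decide

theorem turn_eq_turnAt_add_gains {f g : ι} {i : ℤ}
    (hfg : entryGain x z f i = 0 ∨ exitGain x z g i = 0) :
    turn x f (z i) g = turnAt x z i + entryGain x z f i + exitGain x z g i := by
  revert hfg
  unfold exitGain entryGain turnAt turn
  generalize x (z i) (z (i - 1)) = a, x (z i) (z (i + 1)) = b, x (z i) f = p, x (z i) g = q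
  revert a b p q
  decide

theorem pathCost_insert_two (f g : ι) (d : ℕ) (i : ℤ) :
    pathCost x (z (i - 1) :: z i :: f :: (arc z (i + 1) (d + 2) ++
        [g, z (i + d + 3), z (i + d + 4)])) =
      ∑ k ∈ Finset.range (d + 2 + 2), turnAt x z (i + k) + detour x z f i (i + 1) +
        detour x z g (i + d + 2) (i + d + 3) := by
  have insert_f : pathCost x (z (i - 1) :: z i :: f :: (arc z (i + 1) (d + 2) ++
      [g, z (i + d + 3), z (i + d + 4)])) =
      pathCost x (z (i - 1) :: z i :: (arc z (i + 1) (d + 2) ++ [g, z (i + d + 3), z (i + d + 4)]))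
        + _ :=
    pathCost_insert x [] _ (z (i - 1)) (z i) f (z (i + 1)) (z (i + 1 + 1))
  have insert_g := pathCost_insert x (z (i - 1) :: z i :: arc z (i + 1) d) [] (z (i + d + 1))
    (z (i + d + 2)) g (z (i + d + 3)) (z (i + d + 4))
  have split : ∀ n, arc z (i + 1) (d + 2 + n) =
      arc z (i + 1) d ++ z (i + d + 1) :: z (i + d + 2) :: arc z (i + d + 3) n := fun n => by
    rw [add_assoc d, arc_add, add_comm 2 n, add_right_comm]
    simp only [arc, add_assoc, one_add_one_eq_two]
    norm_num
  have unchanged := pathCost_arc x z (i - 1) (d + 2 + 2)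
  rw [arc, arc, sub_add_cancel, split 2] at unchanged
  rw [insert_f, split 0]
  have h₁ : i + d + 2 - 1 = i + d + 1 := by ring
  have h₂ : i + d + 2 + 1 = i + d + 3 := by ring
  have h₃ : i + d + 3 - 1 = i + d + 2 := by ring
  have h₄ : i + d + 3 + 1 = i + d + 4 := by ring
  simp only [arc, List.cons_append, List.append_assoc, List.nil_append, h₄]
    at insert_g unchanged ⊢
  simp only [detour, exitGain, entryGain, turnAt, h₁, h₂, h₃, h₄, add_sub_cancel_right,
    insert_g, unchanged]
  ring

variable {x z} {t : ℕ} {c : ℤ}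

namespace IsStuck

theorem turnAt_add_period (h : IsStuck x z t c) (i : ℤ) : turnAt x z (i + t) = turnAt x z i :=
  turnAt_periodic x h.apply_add_period i

theorem exitGain_add_period (h : IsStuck x z t c) (f : ι) (i : ℤ) :
    exitGain x z f (i + t) = exitGain x z f i := by
  rw [exitGain, add_sub_right_comm, h.turnAt_add_period]
  simp only [h.apply_add_period, exitGain]

theorem entryGain_add_period (h : IsStuck x z t c) (f : ι) (i : ℤ) :
    entryGain x z f (i + t) = entryGain x z f i := by
  rw [entryGain, add_right_comm, h.turnAt_add_period]
  simp only [h.apply_add_period, entryGain]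

theorem nodup_insert_one (h : IsStuck x z t c) {f : ι} (hf : f ∉ Set.range z) {n : ℕ} (hn : n ≤ t)
    (i : ℤ) : (arc z i n ++ [f]).Nodup := by
  rw [← List.concat_eq_append, List.nodup_concat]
  refine ⟨fun hmem => hf ?_, nodup_arc z h.apply_eq_iff i hn⟩
  obtain ⟨j, -, -, hj⟩ := (mem_arc z).1 hmem
  exact ⟨j, hj⟩

theorem nodup_insert_two (h : IsStuck x z t c) {f g : ι} (hf : f ∉ Set.range z)
    (hg : g ∉ Set.range z) (hfg : f ≠ g) {m r n : ℕ} (hm : m ≤ r) (hn : r + n ≤ t) (i : ℤ) :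
    (arc z (i + r) n ++ (f :: (arc z i m ++ [g]))).Nodup := by
  have hsub : (arc z i m ++ arc z (i + r) n).Sublist (arc z i (r + n)) := by
    obtain ⟨k, rfl⟩ := Nat.exists_eq_add_of_le hm
    rw [arc_add z i (m + k), arc_add]
    exact (List.sublist_append_left _ _).append_right _
  have hmem : ∀ a ∉ Set.range z, a ∉ arc z i m ++ arc z (i + r) n := by
    rintro a ha ha'
    obtain ⟨j, -, -, rfl⟩ := (mem_arc z).1 (hsub.subset ha')
    exact ha ⟨j, rfl⟩
  have hperm : (arc z (i + r) n ++ (f :: (arc z i m ++ [g]))).Perm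
      (f :: g :: (arc z i m ++ arc z (i + r) n)) := by
    refine List.perm_middle.trans (.cons f ?_)
    rw [← List.append_assoc]
    exact (List.perm_append_singleton _ _).trans (.cons g List.perm_append_comm)
  rw [hperm.nodup_iff, List.nodup_cons, List.nodup_cons, List.mem_cons, not_or]
  exact ⟨⟨hfg, hmem f hf⟩, hmem g hg, (nodup_arc z h.apply_eq_iff i hn).sublist hsub⟩

theorem detour_ne (h : IsStuck x z t c) {f : ι} (hf : f ∉ Set.range z) {r : ℕ} (hr : r + 2 ≤ t)
    (i : ℤ) :
    detour x z f i (i + r + 1) ≠ ∑ k ∈ Finset.range r, turnAt x z (i + 1 + k) + 2 ∧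
      (r = 0 → detour x z f i (i + r + 1) ≠ ∑ k ∈ Finset.range r, turnAt x z (i + 1 + k)) := by
  obtain ⟨s, rfl⟩ := Nat.exists_eq_add_of_le hr
  have ne := h.pathCost_reroute_ne (r := r) (s := s) (by omega) i (List.cons_ne_nil f [])
    (h.nodup_insert_one hf (by omega) _)
  have last : i + r + 2 = i + r + 1 + 1 := by ring
  have shift : ∀ k : ℕ, i + 1 + k = i + (k + 1 : ℕ) := fun k => by push_cast; ring
  rw [Finset.sum_range_succ, Finset.sum_range_succ'] at ne
  simp only [List.cons_append, List.nil_append, List.length_singleton, pathCost, last,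
    detour, exitGain, entryGain, shift] at ne ⊢
  push_cast at ne ⊢
  simp only [add_zero, ← add_assoc] at ne ⊢
  omega

theorem detour_one_ne (h : IsStuck x z t c) {f : ι} (hf : f ∉ Set.range z) (i : ℤ) :
    detour x z f i (i + 1) ≠ 0 ∧ detour x z f i (i + 1) ≠ 2 := by
  simpa [and_comm] using h.detour_ne hf (r := 0) (by have := h.three_le; omega) i

theorem detour_two_ne (h : IsStuck x z t c) {f : ι} (hf : f ∉ Set.range z) (i : ℤ) :
    detour x z f i (i + 2) ≠ turnAt x z (i + 1) + 2 := by
  simpa [add_assoc] using (h.detour_ne hf (r := 1) h.three_le i).1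

theorem detour_three_ne (h : IsStuck x z t c) {f : ι} (hf : f ∉ Set.range z) (ht : 4 ≤ t) (i : ℤ) :
    detour x z f i (i + 3) ≠ turnAt x z (i + 1) + turnAt x z (i + 2) + 2 := by
  simpa [add_assoc, Finset.sum_range_succ] using (h.detour_ne hf (r := 2) ht i).1

theorem detour_add_detour_ne_of_consecutive (h : IsStuck x z t c) {f g : ι}
    (hf : f ∉ Set.range z) (hg : g ∉ Set.range z) (hne : f ≠ g) {q : ℕ} (hq : q + 3 ≤ t) {i : ℤ}
    (hfg : entryGain x z f (i + 1) = 0 ∨ exitGain x z g (i + 1) = 0) :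
    detour x z f i (i + 1) + detour x z g (i + 1) (i + q + 2) ≠
      ∑ k ∈ Finset.range q, turnAt x z (i + 2 + k) + 2 := by
  obtain ⟨s, rfl⟩ := Nat.exists_eq_add_of_le hq
  have nodup := h.nodup_insert_two hf hg hne (m := 1) (r := q + 1) (n := s + 2) (by omega)
    (by omega) (i + 1)
  rw [add_right_comm] at nodup
  have ne := (h.pathCost_reroute_ne (r := q + 1) (s := s) (by omega) i (List.cons_ne_nil f _)
    nodup).1
  have shared := turn_eq_turnAt_add_gains x z hfg
  have shift : ∀ k : ℕ, i + 2 + k = i + (k + 1 + 1 : ℕ) := fun k => by push_cast; ring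
  have last : i + (q + 1 : ℕ) + 1 = i + q + 2 := by push_cast; ring
  have last' : i + (q + 1 : ℕ) + 2 = i + q + 2 + 1 := by push_cast; ring
  have last'' : i + (q + 2 : ℕ) = i + q + 2 := by push_cast; ring
  rw [Finset.sum_range_succ, Finset.sum_range_succ', Finset.sum_range_succ', last, last',
    last''] at ne
  simp only [arc, List.cons_append, List.nil_append, pathCost, detour, exitGain, entryGain, shift,
    Nat.cast_zero, zero_add, add_zero, Nat.cast_one] at ne shared ⊢
  omega

theorem detour_add_detour_ne_of_separated (h : IsStuck x z t c) {f g : ι}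
    (hf : f ∉ Set.range z) (hg : g ∉ Set.range z) (hne : f ≠ g) {d : ℕ} (hd : d + 4 ≤ t) (i : ℤ) :
    detour x z f i (i + 1) + detour x z g (i + d + 2) (i + d + 3) ≠ 2 := by
  obtain ⟨s, rfl⟩ := Nat.exists_eq_add_of_le hd
  have nodup := h.nodup_insert_two hf hg hne (le_refl (d + 2)) (n := s + 2) (by omega) (i + 1)
  rw [add_right_comm] at nodup
  have ne := (h.pathCost_reroute_ne (r := d + 2) (s := s) (by omega) i (List.cons_ne_nil f _)
    nodup).1
  have last : i + (d + 2 : ℕ) + 1 = i + d + 3 := by push_cast; ring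
  have last' : i + (d + 2 : ℕ) + 2 = i + d + 4 := by push_cast; ring
  rw [List.cons_append, List.append_assoc, last, last', List.singleton_append,
    pathCost_insert_two] at ne
  omega

end IsStuck
end Detour

section TwoOutsiders

variable {ι : Type*} {x : ι → ι → Bool} {z : ℤ → ι} {t : ℕ} {c : ℤ}

theorem turn_triangle (x : ι → ι → Bool) (f u v w : ι) :
    turn x u f v + turn x v f w + turn x u f w = 3 ∨
      turn x u f v + turn x v f w + turn x u f w = 5 := by
  have := mismatch_triangle (x f u) (x f v) (x f w)
  unfold turn; omega

/-- The cost of inserting `f` between `z i` and `z (i + 1)`. -/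
def insertCost (x : ι → ι → Bool) (z : ℤ → ι) (f : ι) (i : ℤ) : ℤ := detour x z f i (i + 1)

namespace IsStuck

theorem insertCost_cases (h : IsStuck x z t c) {f : ι} (hf : f ∉ Set.range z) {i j : ℤ}
    (hj : j = i + 1) :
    insertCost x z f i = -1 ∧ exitGain x z f i = -1 ∧ entryGain x z f j = -1 ∨
      insertCost x z f i = 1 ∧
        (exitGain x z f i + entryGain x z f j = -1 ∨ exitGain x z f i + entryGain x z f j = 0) ∨
      insertCost x z f i = 3 ∧ exitGain x z f i + entryGain x z f j = 1 ∨
      3 ≤ insertCost x z f i ∧ exitGain x z f i = 1 ∧ entryGain x z f j = 1 := by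
  subst hj
  have ne := h.detour_one_ne hf i
  have hi := exitGain_entryGain_cases x z f i
  have hj := exitGain_entryGain_cases x z f (i + 1)
  have := turn_eq_one_or_two x (z i) f (z (i + 1))
  unfold insertCost
  unfold detour at ne ⊢
  omega

theorem insertCost_add_ne (h : IsStuck x z t c) {f g : ι} (hf : f ∉ Set.range z)
    (hg : g ∉ Set.range z) (hne : f ≠ g) {i j : ℤ} (hij : i < j) (hjt : j < i + t)
    (hfg : j = i + 1 → entryGain x z f j = 0 ∨ exitGain x z g j = 0)
    (hgf : j + 1 = i + t → entryGain x z g i = 0 ∨ exitGain x z f i = 0) :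
    insertCost x z f i + insertCost x z g j ≠ 2 := by
  have ht := h.three_le
  obtain rfl | hj := eq_or_ne j (i + 1)
  · simpa [add_assoc, insertCost] using
      h.detour_add_detour_ne_of_consecutive hf hg hne (q := 0) ht (hfg rfl)
  obtain hj' | hj' := eq_or_ne (j + 1) (i + t)
  · have ne := h.detour_add_detour_ne_of_consecutive hg hf hne.symm (q := 0) ht (i := j)
      (by rw [hj', h.entryGain_add_period, h.exitGain_add_period]; exact hgf hj')
    have next : j + 2 = i + 1 + t := by omega
    simp only [Nat.cast_zero, add_zero, Finset.range_zero, Finset.sum_empty, zero_add, next, hj',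
      detour, h.exitGain_add_period, h.entryGain_add_period, h.apply_add_period] at ne
    simp only [insertCost, detour, hj', h.entryGain_add_period, h.apply_add_period]
    omega
  · obtain ⟨d, rfl⟩ : ∃ d : ℕ, j = i + d + 2 := ⟨(j - i - 2).toNat, by omega⟩
    simpa [insertCost, add_assoc] using
      h.detour_add_detour_ne_of_separated hf hg hne (d := d) (by omega) i

theorem entryGain_of_exitGain_eq_one (h : IsStuck x z t c) {f : ι} (hf : f ∉ Set.range z)
    {i : ℤ} (h₀ : exitGain x z f i = 1) (h₁ : turnAt x z (i + 1) = 1)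
    (h₁' : exitGain x z f (i + 1) = 0) : entryGain x z f (i + 2) = -1 := by
  have ne₀₁ := h.detour_one_ne hf i
  have ne₁₂ := h.detour_one_ne hf (i + 1)
  have ne₀₂ := h.detour_two_ne hf i
  have hi₁ := exitGain_entryGain_cases x z f (i + 1)
  have hi₂ := exitGain_entryGain_cases x z f (i + 2)
  have triangle := turn_triangle x f (z i) (z (i + 1)) (z (i + 2))
  have t₀₁ := turn_eq_one_or_two x (z i) f (z (i + 1))
  have t₁₂ := turn_eq_one_or_two x (z (i + 1)) f (z (i + 2))
  have t₀₂ := turn_eq_one_or_two x (z i) f (z (i + 2))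
  rw [add_assoc, one_add_one_eq_two] at ne₁₂
  unfold detour at ne₀₁ ne₁₂ ne₀₂
  omega

theorem not_exitGain_eq_one_of_turnAt_eq_two (h : IsStuck x z t c) {f : ι} (hf : f ∉ Set.range z)
    {i : ℤ} (h₁ : turnAt x z (i + 1) = 2) (h₂ : entryGain x z f (i + 2) = 1) :
    exitGain x z f i ≠ 1 := by
  have ne₀₁ := h.detour_one_ne hf i
  have ne₁₂ := h.detour_one_ne hf (i + 1)
  have ne₀₂ := h.detour_two_ne hf i
  have hi₁ := exitGain_entryGain_cases x z f (i + 1)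
  have triangle := turn_triangle x f (z i) (z (i + 1)) (z (i + 2))
  have t₀₁ := turn_eq_one_or_two x (z i) f (z (i + 1))
  have t₁₂ := turn_eq_one_or_two x (z (i + 1)) f (z (i + 2))
  have t₀₂ := turn_eq_one_or_two x (z i) f (z (i + 2))
  rw [add_assoc, one_add_one_eq_two] at ne₁₂
  unfold detour at ne₀₁ ne₁₂ ne₀₂
  omega

theorem exitGain_add_natCast_eq_one (h : IsStuck x z t c) (hz : ∀ i, turnAt x z i = 1) {f : ι}
    (hf : f ∉ Set.range z) {i : ℤ} (hi : exitGain x z f i = 1) (n : ℕ) :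
    exitGain x z f (i + n) = 1 := by
  induction n with
  | zero => simpa using hi
  | succ n ih =>
    by_contra hn
    have h₁ := exitGain_entryGain_cases x z f (i + n + 1)
    have h₂ := exitGain_entryGain_cases x z f (i + n + 2)
    rw [hz] at h₁ h₂
    rw [Nat.cast_succ, ← add_assoc] at hn
    have := h.entryGain_of_exitGain_eq_one hf ih (hz _) (by omega)
    omega

theorem exitGain_ne_one (h : IsStuck x z t c) (ht : 4 ≤ t) (hz : ∀ i, turnAt x z i = 1) {f : ι}
    (hf : f ∉ Set.range z) (i : ℤ) : exitGain x z f i ≠ 1 := by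
  intro hi
  have gains : ∀ n : ℕ, exitGain x z f (i + n) = 1 ∧ entryGain x z f (i + n) = 1 := fun n => by
    have := h.exitGain_add_natCast_eq_one hz hf hi n
    have := exitGain_entryGain_cases x z f (i + n)
    omega
  have two_apart : ∀ n : ℕ, turn x (z (i + n)) f (z (i + (n + 2 : ℕ))) = 2 := fun n => by
    have ne := h.detour_two_ne hf (i + n)
    rw [detour, hz, (gains n).1, add_assoc i, ← Nat.cast_ofNat, ← Nat.cast_add,
      (gains (n + 2)).2] at ne
    have := turn_eq_one_or_two x (z (i + n)) f (z (i + (n + 2 : ℕ)))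
    omega
  have three_apart : ∀ n : ℕ, turn x (z (i + n)) f (z (i + (n + 3 : ℕ))) = 1 := fun n => by
    have ne := h.detour_three_ne hf ht (i + n)
    rw [detour, hz, hz, (gains n).1, add_assoc i, ← Nat.cast_ofNat, ← Nat.cast_add,
      (gains (n + 3)).2] at ne
    have := turn_eq_one_or_two x (z (i + n)) f (z (i + (n + 3 : ℕ)))
    omega
  have adjacent : ∀ n : ℕ, turn x (z (i + n)) f (z (i + (n + 1 : ℕ))) = 2 := fun n => by
    have := turn_triangle x f (z (i + n)) (z (i + (n + 1 : ℕ))) (z (i + (n + 3 : ℕ)))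
    have h₁₃ : turn x (z (i + (n + 1 : ℕ))) f (z (i + (n + 3 : ℕ))) = 2 := two_apart (n + 1)
    have := three_apart n
    have := turn_eq_one_or_two x (z (i + n)) f (z (i + (n + 1 : ℕ)))
    omega
  have triangle := turn_triangle x f (z (i + (0 : ℕ))) (z (i + (1 : ℕ))) (z (i + (2 : ℕ)))
  rw [adjacent 0, adjacent 1, two_apart 0] at triangle
  omega

theorem exists_turnAt_eq_two (h : IsStuck x z t c) (ht : 4 ≤ t) {f g : ι} (hf : f ∉ Set.range z)
    (hg : g ∉ Set.range z) (hne : f ≠ g) : ∃ i, turnAt x z i = 2 := by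
  by_contra! hz
  replace hz := fun i => (turnAt_eq_one_or_two x z i).resolve_right (hz i)
  have no_gain : ∀ a ∉ Set.range z, ∀ i, exitGain x z a i = 0 ∧ entryGain x z a i = 0 := by
    intro a ha i
    have := h.exitGain_ne_one ht hz ha i
    have := exitGain_entryGain_cases x z a i
    have := hz i
    omega
  have cost_one : ∀ a ∉ Set.range z, ∀ i, insertCost x z a i = 1 := by
    intro a ha i
    have := h.insertCost_cases ha (i := i) rfl
    have := no_gain a ha i
    have := no_gain a ha (i + 1)
    omega
  refine h.insertCost_add_ne hf hg hne (i := 0) (j := 1) one_pos (by omega)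
    (fun _ => .inl (no_gain f hf 1).2) (fun _ => .inl (no_gain g hg 0).2) ?_
  rw [cost_one f hf, cost_one g hg, one_add_one_eq_two]

end IsStuck
end TwoOutsiders

section ThreeOutsiders

variable {ι : Type*} {x : ι → ι → Bool} {z : ℤ → ι} {t : ℕ} {c : ℤ}

/-- The route along `z` visits both ends of `z i`, the outsider `f` is attached to the second of
them, and inserting `f` costs one vertex just before `z i` and three just after it. -/
structure IsBlockedRight (x : ι → ι → Bool) (z : ℤ → ι) (f : ι) (i : ℤ) : Prop where
  insertCost_pred : insertCost x z f (i - 1) = 1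
  entryGain_eq : entryGain x z f i = -1
  entryGain_succ : entryGain x z f (i + 1) = 1

theorem turnAt_reverse (x : ι → ι → Bool) (z : ℤ → ι) (i : ℤ) :
    turnAt x (fun i => z (-i)) i = turnAt x z (-i) := by
  rw [turnAt, turnAt, turn_comm, neg_add', neg_sub, sub_eq_neg_add 1 i]

theorem entryGain_reverse (x : ι → ι → Bool) (z : ℤ → ι) (f : ι) (i : ℤ) :
    entryGain x (fun i => z (-i)) f i = exitGain x z f (-i) := by
  rw [entryGain, exitGain, turnAt_reverse, turn_comm, neg_add, ← sub_eq_add_neg]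

namespace IsStuck

theorem insertCost_neighbors (h : IsStuck x z t c) {f g : ι} (hf : f ∉ Set.range z)
    (hg : g ∉ Set.range z) (hne : f ≠ g) {i : ℤ} (hfi : insertCost x z f i = -1)
    (hgi : insertCost x z g i = -1) :
    exitGain x z f (i - 1) ≠ 1 ∧ insertCost x z f (i - 1) = 1 ∧ insertCost x z f (i + 1) = 1 := by
  have ht := h.three_le
  have f_at := h.insertCost_cases hf (i := i) rfl
  have f_at₀ := exitGain_entryGain_cases x z f i
  have f_at₁ := exitGain_entryGain_cases x z f (i + 1)
  have before := h.insertCost_cases hf (sub_add_cancel i 1).symm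
  have after := h.insertCost_cases hf (i := i + 1) rfl
  have ne_before := h.insertCost_add_ne hf hg hne (sub_one_lt i) (by omega) (by omega) (by omega)
  have ne_after := h.insertCost_add_ne hg hf hne.symm (lt_add_one i) (by omega) (by omega)
    (by omega)
  omega

theorem insertCost_ne_neg_one (h : IsStuck x z t c) {f g : ι} (hf : f ∉ Set.range z)
    (hg : g ∉ Set.range z) (hne : f ≠ g) {i : ℤ} (hfi : insertCost x z f i = -1) :
    insertCost x z g i ≠ -1 := by
  intro hgi
  have ht := h.three_le
  obtain ⟨-, f_before, f_after⟩ := h.insertCost_neighbors hf hg hne hfi hgi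
  obtain ⟨g_exit, g_before, g_after⟩ := h.insertCost_neighbors hg hf hne.symm hgi hfi
  have f_at := exitGain_entryGain_cases x z f (i - 1)
  have g_at := exitGain_entryGain_cases x z g (i - 1)
  obtain independent | independent :
      (entryGain x z g (i - 1) = 0 ∨ exitGain x z f (i - 1) = 0) ∨
        (entryGain x z f (i - 1) = 0 ∨ exitGain x z g (i - 1) = 0) := by omega
  · have := h.insertCost_add_ne hf hg hne (i := i - 1) (j := i + 1) (by omega) (by omega)
      (by omega) fun _ => independent
    omega
  · have := h.insertCost_add_ne hg hf hne.symm (i := i - 1) (j := i + 1) (by omega) (by omega)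
      (by omega) fun _ => independent
    omega

theorem exitGain_pred_eq_zero (h : IsStuck x z t c) {f : ι} (hf : f ∉ Set.range z) {i : ℤ}
    (B : IsBlockedRight x z f i) : exitGain x z f (i - 1) = 0 := by
  have before := h.insertCost_cases hf (sub_add_cancel i 1).symm
  have f_at := exitGain_entryGain_cases x z f i
  have f_before := B.insertCost_pred
  have f_entry := B.entryGain_eq
  have := h.not_exitGain_eq_one_of_turnAt_eq_two hf (i := i - 1) (by rw [sub_add_cancel]; omega)
    (by rw [show i - 1 + 2 = i + 1 by ring]; exact B.entryGain_succ)
  omega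

section BlockedRight

variable {f g : ι} {i : ℤ}

theorem entryGain_add_two_ne_neg_one (h : IsStuck x z t c) (hf : f ∉ Set.range z)
    (hg : g ∉ Set.range z) (hne : f ≠ g) (Bf : IsBlockedRight x z f i)
    (Bg : IsBlockedRight x z g i) : entryGain x z f (i + 2) ≠ -1 := by
  intro right
  have ht := h.three_le
  have f_at := exitGain_entryGain_cases x z f (i + 1)
  have f_after := h.insertCost_cases hf (i := i + 1) (j := i + 2) (by ring)
  have f_entry := Bf.entryGain_succ
  have g_before := Bg.insertCost_pred
  have g_exit := h.exitGain_pred_eq_zero hg Bg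
  have := h.insertCost_add_ne hg hf hne.symm (i := i - 1) (j := i + 1) (by omega) (by omega)
    (by omega) (by omega)
  omega

theorem insertCost_add_two_ne_one (h : IsStuck x z t c) (hf : f ∉ Set.range z)
    (hg : g ∉ Set.range z) (hne : f ≠ g) (ht : 4 ≤ t) (Bg : IsBlockedRight x z g i) :
    insertCost x z f (i + 2) ≠ 1 := by
  have g_before := Bg.insertCost_pred
  have g_exit := h.exitGain_pred_eq_zero hg Bg
  have := h.insertCost_add_ne hg hf hne.symm (i := i - 1) (j := i + 2) (by omega) (by omega)
    (by omega) (by omega)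
  omega

theorem exitGain_add_two_eq_zero_of_length_eq_three (h : IsStuck x z t c) (ht : t = 3)
    (hf : f ∉ Set.range z) (Bf : IsBlockedRight x z f i) : exitGain x z f (i + 2) = 0 := by
  rw [← h.exitGain_pred_eq_zero hf Bf, ← h.exitGain_add_period f (i - 1)]
  congr 1
  omega

theorem exitGain_add_two_ne_neg_one (h : IsStuck x z t c) (hf : f ∉ Set.range z)
    (hg : g ∉ Set.range z) (hne : f ≠ g) (Bf : IsBlockedRight x z f i)
    (Bg : IsBlockedRight x z g i) : exitGain x z f (i + 2) ≠ -1 := by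
  intro left
  have ht : 4 ≤ t := by
    have := h.exitGain_add_two_eq_zero_of_length_eq_three (hf := hf) (Bf := Bf)
    have := h.three_le
    omega
  have g_not_right := h.entryGain_add_two_ne_neg_one hg hf hne.symm Bg Bf
  have g_after_ne := h.insertCost_add_two_ne_one hg hf hne.symm ht Bf
  have f_entry := Bf.entryGain_succ
  have f_at₁ := exitGain_entryGain_cases x z f (i + 1)
  have f_at₂ := exitGain_entryGain_cases x z f (i + 2)
  have g_at₂ := exitGain_entryGain_cases x z g (i + 2)
  have f_before := h.insertCost_cases hf (i := i + 1) (j := i + 2) (by ring)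
  have g_after := h.insertCost_cases hg (i := i + 2) rfl
  have g_at₃ := exitGain_entryGain_cases x z g (i + 2 + 1)
  have := h.insertCost_add_ne hf hg hne (i := i + 1) (j := i + 2) (by omega) (by omega)
    (by omega) (by omega)
  omega

theorem exitGain_add_two_ne_one (h : IsStuck x z t c) (hf : f ∉ Set.range z)
    (hg : g ∉ Set.range z) (hne : f ≠ g) (Bf : IsBlockedRight x z f i)
    (Bg : IsBlockedRight x z g i) : exitGain x z f (i + 2) ≠ 1 := by
  intro off
  have ht : 4 ≤ t := by
    have := h.exitGain_add_two_eq_zero_of_length_eq_three (hf := hf) (Bf := Bf)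
    have := h.three_le
    omega
  have f_entry := Bf.entryGain_eq
  have f_entry' := Bf.entryGain_succ
  have g_before := Bg.insertCost_pred
  have f_at₀ := exitGain_entryGain_cases x z f i
  have f_at₁ := exitGain_entryGain_cases x z f (i + 1)
  have f_at₂ := exitGain_entryGain_cases x z f (i + 2)
  have ne := h.detour_add_detour_ne_of_consecutive hg hf hne.symm (q := 1) ht (i := i - 1)
    (.inr (by rw [sub_add_cancel]; omega))
  have ne' := h.detour_two_ne hf i
  have := turn_eq_one_or_two x (z i) f (z (i + 2))
  have next : i - 1 + 2 = i + 1 := by ring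
  have next' : i - 1 + (1 : ℕ) + 2 = i + 2 := by push_cast; ring
  rw [insertCost, sub_add_cancel] at g_before
  simp only [sub_add_cancel, next, next', g_before, Finset.sum_range_one, Nat.cast_zero,
    add_zero] at ne
  unfold detour at ne ne'
  omega

theorem turnAt_add_two_ne_one (h : IsStuck x z t c) (hf : f ∉ Set.range z)
    (hg : g ∉ Set.range z) (hne : f ≠ g) (Bf : IsBlockedRight x z f i)
    (Bg : IsBlockedRight x z g i) : turnAt x z (i + 2) ≠ 1 := by
  intro single
  have off := h.exitGain_add_two_ne_one hf hg hne Bf Bg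
  have f_exit := h.exitGain_pred_eq_zero hf Bf
  obtain ⟨f_before, f_entry, f_entry'⟩ := Bf
  have f_at₀ := exitGain_entryGain_cases x z f i
  have f_at₁ := exitGain_entryGain_cases x z f (i + 1)
  have f_at₂ := exitGain_entryGain_cases x z f (i + 2)
  have next : i + 1 + 1 = i + 2 := by ring
  obtain ht | ht := h.three_le.lt_or_eq
  · have f_at₃ := h.entryGain_of_exitGain_eq_one hf (i := i + 1) (by omega)
      (by rw [next]; omega) (by rw [next]; omega)
    have f_after := h.insertCost_cases hf (i := i + 2) (j := i + 1 + 2) (by ring)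
    have := h.insertCost_add_two_ne_one hf hg hne ht Bg
    omega
  · have triangle := turn_triangle x f (z (i - 1)) (z i) (z (i + 1))
    have close : z (i + 2) = z (i - 1) := by
      rw [← h.apply_add_period (i - 1)]; congr 1; omega
    have cost₀ := h.insertCost_cases hf (i := i) rfl
    have cost₁ := h.insertCost_cases hf (i := i + 1) next.symm
    have := turn_comm x (z (i - 1)) f (z (i + 1))
    simp only [insertCost, detour, sub_add_cancel, next, close] at f_before cost₀ cost₁
    omega

theorem not_isBlockedRight (h : IsStuck x z t c) (hf : f ∉ Set.range z)
    (hg : g ∉ Set.range z) (hne : f ≠ g) (Bf : IsBlockedRight x z f i) :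
    ¬ IsBlockedRight x z g i := by
  intro Bg
  have double := h.turnAt_add_two_ne_one hf hg hne Bf Bg
  have not_left := h.exitGain_add_two_ne_neg_one hf hg hne Bf Bg
  have not_right := h.entryGain_add_two_ne_neg_one hf hg hne Bf Bg
  have := exitGain_entryGain_cases x z f (i + 2)
  omega

end BlockedRight

section TwoRight

variable {f g k : ι} {i : ℤ}

theorem isBlockedRight (h : IsStuck x z t c) (hf : f ∉ Set.range z) (hg : g ∉ Set.range z)
    (hne : f ≠ g) (hf₀ : insertCost x z f (i - 1) = 1) (hg₀ : insertCost x z g (i - 1) = 1)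
    (hgi : entryGain x z g i = -1) : IsBlockedRight x z g i := by
  have ht := h.three_le
  refine ⟨hg₀, hgi, ?_⟩
  have g_at := exitGain_entryGain_cases x z g i
  have g_at' := exitGain_entryGain_cases x z g (i + 1)
  have g_after := h.insertCost_cases hg (i := i) rfl
  have := h.insertCost_add_ne hf hg hne (sub_one_lt i) (by omega) (by omega) (by omega)
  omega

theorem insertCost_pred_eq_neg_one (h : IsStuck x z t c) (hf : f ∉ Set.range z)
    (hg : g ∉ Set.range z) (hne : f ≠ g) (hfi : entryGain x z f i = -1)
    (hgi : entryGain x z g i = -1) (hg₀ : insertCost x z g (i - 1) ≠ -1) :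
    insertCost x z f (i - 1) = -1 := by
  by_contra hf₀
  have f_at := exitGain_entryGain_cases x z f (i - 1)
  have g_at := exitGain_entryGain_cases x z g (i - 1)
  have f_before := h.insertCost_cases hf (sub_add_cancel i 1).symm
  have g_before := h.insertCost_cases hg (sub_add_cancel i 1).symm
  have hf₀ : insertCost x z f (i - 1) = 1 := by omega
  have hg₀ : insertCost x z g (i - 1) = 1 := by omega
  exact h.not_isBlockedRight hf hg hne (h.isBlockedRight hg hf hne.symm hg₀ hf₀ hfi)
    (h.isBlockedRight hf hg hne hf₀ hg₀ hgi)

theorem insertCost_eq_one (h : IsStuck x z t c) (hf : f ∉ Set.range z) (hg : g ∉ Set.range z)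
    (hne : f ≠ g) (hf₀ : insertCost x z f (i - 1) = -1) (hgi : entryGain x z g i = -1) :
    insertCost x z g i = 1 := by
  have ht := h.three_le
  have g_at := exitGain_entryGain_cases x z g i
  have g_at' := exitGain_entryGain_cases x z g (i + 1)
  have g_after := h.insertCost_cases hg (i := i) rfl
  have := h.insertCost_add_ne hf hg hne (sub_one_lt i) (by omega) (by omega) (by omega)
  omega

theorem exitGain_eq_neg_one (h : IsStuck x z t c) (hg : g ∉ Set.range z) (hk : k ∉ Set.range z)
    (hf : f ∉ Set.range z) (hfk : f ≠ k) (hgk : g ≠ k) (hne : f ≠ g)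
    (hf₀ : insertCost x z f (i - 1) = -1) (hgi : entryGain x z g i = -1) :
    exitGain x z k i = -1 := by
  have ht := h.three_le
  have g_at := exitGain_entryGain_cases x z g i
  have k_at := exitGain_entryGain_cases x z k i
  have k_at' := exitGain_entryGain_cases x z k (i - 1)
  have k_before := h.insertCost_cases hk (sub_add_cancel i 1).symm
  have g_after := h.insertCost_eq_one hf hg hne hf₀ hgi
  have k_before_ne := h.insertCost_ne_neg_one hf hk hfk hf₀
  have := h.insertCost_add_ne hk hg hgk.symm (sub_one_lt i) (by omega) (by omega) (by omega)
  omega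

theorem entryGain_ne_neg_one_of_insertCost (h : IsStuck x z t c) (hf : f ∉ Set.range z)
    (hg : g ∉ Set.range z) (hne : f ≠ g) (hf₁ : insertCost x z f i = 1)
    (hg₁ : insertCost x z g i = 1) (hfi : entryGain x z f i = -1) : entryGain x z g i ≠ -1 := by
  intro hgi
  have ht := h.three_le
  have f_at := exitGain_entryGain_cases x z f i
  have g_at := exitGain_entryGain_cases x z g i
  have f_at₀ := exitGain_entryGain_cases x z f (i - 1)
  have g_at₀ := exitGain_entryGain_cases x z g (i - 1)
  have f_before := h.insertCost_cases hf (sub_add_cancel i 1).symm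
  have g_before := h.insertCost_cases hg (sub_add_cancel i 1).symm
  have fg := h.insertCost_add_ne hf hg hne (sub_one_lt i) (by omega) (by omega) (by omega)
  have gf := h.insertCost_add_ne hg hf hne.symm (sub_one_lt i) (by omega) (by omega) (by omega)
  exact h.insertCost_ne_neg_one hf hg hne (i := i - 1) (by omega) (by omega)

theorem exitGain_pred_ne_neg_one (h : IsStuck x z t c) (hf : f ∉ Set.range z)
    (hg : g ∉ Set.range z) (hk : k ∉ Set.range z) (hfk : f ≠ k) (hgk : g ≠ k)
    (hf₀ : insertCost x z f (i - 1) = -1) (hg₁ : insertCost x z g i = 1)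
    (hki : exitGain x z k i = -1) : exitGain x z k (i - 1) ≠ -1 := by
  intro hk₀
  have ht := h.three_le
  have prev : i - 1 = i - 2 + 1 := by ring
  have k_at := exitGain_entryGain_cases x z k i
  have f_before := h.insertCost_cases hf (sub_add_cancel i 1).symm
  have k_before := h.insertCost_cases hk (sub_add_cancel i 1).symm
  have f_at₀ := exitGain_entryGain_cases x z f (i - 1)
  have k_at₀ := exitGain_entryGain_cases x z k (i - 1)
  have f_before₂ := h.insertCost_cases hf prev
  have k_before₂ := h.insertCost_cases hk prev
  have fk := h.insertCost_add_ne hf hk hfk (i := i - 2) (j := i - 1) (by omega) (by omega)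
    (by omega) (by omega)
  have kf := h.insertCost_add_ne hk hf hfk.symm (i := i - 2) (j := i - 1) (by omega) (by omega)
    (by omega) (by omega)
  have f_at₂ := exitGain_entryGain_cases x z f (i - 2)
  have k_at₂ := exitGain_entryGain_cases x z k (i - 2)
  have k_exit : exitGain x z k (i - 2) = 0 := by omega
  have := h.insertCost_add_ne hk hg hgk.symm (i := i - 2) (j := i) (by omega) (by omega)
    (by omega) (by omega)
  omega

theorem insertCost_pred_ne_neg_one (h : IsStuck x z t c) (hf : f ∉ Set.range z)
    (hg : g ∉ Set.range z) (hk : k ∉ Set.range z) (hfg : f ≠ g) (hfk : f ≠ k) (hgk : g ≠ k)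
    (hgi : entryGain x z g i = -1) : insertCost x z f (i - 1) ≠ -1 := by
  intro hf₀
  have k_exit := h.exitGain_eq_neg_one hg hk hf hfk hgk hfg hf₀ hgi
  have g_after := h.insertCost_eq_one hf hg hfg hf₀ hgi
  have k_exit_pred := h.exitGain_pred_ne_neg_one hf hg hk hfk hgk hf₀ g_after k_exit
  have g_before_ne := h.insertCost_ne_neg_one hf hg hfg hf₀
  have f_before := h.insertCost_cases hf (sub_add_cancel i 1).symm
  have g_before := h.insertCost_cases hg (sub_add_cancel i 1).symm
  have k_before := h.insertCost_cases hk (sub_add_cancel i 1).symm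
  have f_at := exitGain_entryGain_cases x z f (i - 1)
  have g_at := exitGain_entryGain_cases x z g (i - 1)
  have k_at := exitGain_entryGain_cases x z k (i - 1)
  have k_at' := exitGain_entryGain_cases x z k i
  exact h.entryGain_ne_neg_one_of_insertCost hg hk hgk (i := i - 1) (by omega) (by omega)
    (by omega) (by omega)

theorem entryGain_ne_neg_one (h : IsStuck x z t c) (hf : f ∉ Set.range z) (hg : g ∉ Set.range z)
    (hk : k ∉ Set.range z) (hfg : f ≠ g) (hfk : f ≠ k) (hgk : g ≠ k)
    (hfi : entryGain x z f i = -1) : entryGain x z g i ≠ -1 := fun hgi =>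
  h.insertCost_pred_ne_neg_one hf hg hk hfg hfk hgk hgi <|
    h.insertCost_pred_eq_neg_one hf hg hfg hfi hgi <|
      h.insertCost_pred_ne_neg_one hg hf hk hfg.symm hgk hfk hfi

theorem exitGain_ne_neg_one (h : IsStuck x z t c) (hf : f ∉ Set.range z) (hg : g ∉ Set.range z)
    (hk : k ∉ Set.range z) (hfg : f ≠ g) (hfk : f ≠ k) (hgk : g ≠ k)
    (hfi : exitGain x z f i = -1) : exitGain x z g i ≠ -1 := by
  have outside : ∀ a ∉ Set.range z, a ∉ Set.range fun i => z (-i) := by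
    rintro a ha ⟨j, rfl⟩
    exact ha ⟨-j, rfl⟩
  have reversed := h.reverse.entryGain_ne_neg_one (i := -i) (outside f hf) (outside g hg)
    (outside k hk) hfg hfk hgk
  simp only [entryGain_reverse, neg_neg] at reversed
  exact reversed hfi

theorem turnAt_eq_one (h : IsStuck x z t c) (hf : f ∉ Set.range z) (hg : g ∉ Set.range z)
    (hk : k ∉ Set.range z) (hfg : f ≠ g) (hfk : f ≠ k) (hgk : g ≠ k) (i : ℤ) :
    turnAt x z i = 1 := by
  by_contra hi
  have left_or_right : ∀ a, exitGain x z a i = -1 ∨ entryGain x z a i = -1 := fun a => by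
    have := exitGain_entryGain_cases x z a i
    omega
  have fg_exit := h.exitGain_ne_neg_one hf hg hk hfg hfk hgk (i := i)
  have fg_entry := h.entryGain_ne_neg_one hf hg hk hfg hfk hgk (i := i)
  have fk_exit := h.exitGain_ne_neg_one hf hk hg hfk hfg hgk.symm (i := i)
  have fk_entry := h.entryGain_ne_neg_one hf hk hg hfk hfg hgk.symm (i := i)
  have gk_exit := h.exitGain_ne_neg_one hg hk hf hgk hfg.symm hfk.symm (i := i)
  have gk_entry := h.entryGain_ne_neg_one hg hk hf hgk hfg.symm hfk.symm (i := i)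
  have := left_or_right f
  have := left_or_right g
  have := left_or_right k
  grind

end TwoRight

end IsStuck
end ThreeOutsiders

section Unroll

variable {ι : Type*}

theorem sum_range_add_of_periodic {M : Type*} [AddCommGroup M] {f : ℤ → M} {t : ℕ}
    (hf : Function.Periodic f t) (i : ℤ) :
    ∑ k ∈ Finset.range t, f (i + k) = ∑ k ∈ Finset.range t, f k := by
  have shift : ∀ i, ∑ k ∈ Finset.range t, f (i + 1 + k) = ∑ k ∈ Finset.range t, f (i + k) := by
    intro i
    have wrap := Finset.sum_range_succ' (fun k : ℕ => f (i + k)) t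
    rw [Finset.sum_range_succ, hf, Nat.cast_zero, add_zero, add_left_inj] at wrap
    rw [wrap]
    refine Finset.sum_congr rfl fun k _ => ?_
    congr 1; push_cast; ring
  induction i using Int.induction_on with
  | zero => simp only [zero_add]
  | succ i ih => rw [shift, ih]
  | pred i ih => rw [← shift, sub_add_cancel, ih]

/-- The periodic sequence that runs around the cyclic list `l`. -/
def unroll (l : List ι) (hl : 0 < l.length) (i : ℤ) : ι :=
  l[(i % l.length).toNat]'(by
    have := Int.emod_lt_of_pos i (Int.natCast_pos.2 hl)
    have := Int.emod_nonneg i (Int.natCast_pos.2 hl).ne'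
    omega)

variable {l : List ι} (hl : 0 < l.length)

theorem unroll_periodic : Function.Periodic (unroll l hl) l.length := fun i => by
  simp only [unroll, Int.add_emod_right]

theorem unroll_apply_eq_iff (hn : l.Nodup) (i j : ℤ) :
    unroll l hl i = unroll l hl j ↔ i ≡ j [ZMOD l.length] := by
  have := Int.emod_nonneg i (Int.natCast_pos.2 hl).ne'
  have := Int.emod_nonneg j (Int.natCast_pos.2 hl).ne'
  rw [unroll, unroll, hn.getElem_inj_iff, Int.ModEq]
  omega

theorem arc_eq_of_apply_eq_getElem {z : ℤ → ι} {i : ℤ}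
    (hz : ∀ k (hk : k < l.length), z (i + k) = l[k]) : arc z i l.length = l := by
  induction l generalizing i with
  | nil => rfl
  | cons a l ih =>
    have head := hz 0 (Nat.succ_pos _)
    rw [Nat.cast_zero, add_zero, List.getElem_cons_zero] at head
    rw [List.length_cons, arc, head, ih]
    intro k hk
    rw [← List.getElem_cons_succ a l k (Nat.succ_lt_succ hk), ← hz, Nat.cast_succ]
    congr 1; ring

theorem arc_unroll : arc (unroll l hl) 0 l.length = l :=
  arc_eq_of_apply_eq_getElem fun k hk => by
    simp only [unroll, zero_add, Int.emod_eq_of_lt (Int.natCast_nonneg k) (Int.ofNat_lt.2 hk),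
      Int.toNat_natCast]

theorem sum_turnAt_unroll (x : ι → ι → Bool) (h₂ : 2 ≤ l.length) (i : ℤ) :
    ∑ k ∈ Finset.range l.length, turnAt x (unroll l hl) (i + k) = tourCost x l := by
  have hper := unroll_periodic hl
  obtain ⟨n, hn⟩ := Nat.exists_eq_add_of_le h₂
  have take_eq : l.take 2 = arc (unroll l hl) 0 2 := by
    conv_lhs => rw [← arc_unroll hl, hn, arc_add]
    rfl
  have wrap : arc (unroll l hl) 0 (l.length + 2) = l ++ l.take 2 := by
    rw [arc_add, arc_unroll, take_eq, arc, arc, arc, arc, add_right_comm, hper, hper]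
    rfl
  rw [tourCost, ← wrap, pathCost_arc, sum_range_add_of_periodic (turnAt_periodic x hper),
    sum_range_add_of_periodic (turnAt_periodic x hper)]

end Unroll

section Tours

variable {ι : Type*} {x : ι → ι → Bool} {z : ℤ → ι} {t : ℕ} {c : ℤ}

namespace IsStuck

theorem exists_outsiders [Fintype ι] (h : IsStuck x z t c) {n : ℕ}
    (hn : n + t ≤ Fintype.card ι) : ∃ s : Finset ι, s.card = n ∧ ∀ f ∈ s, f ∉ Set.range z := by
  classical
  have card_le : ((Finset.Ico (0 : ℤ) t).image z).card ≤ t := by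
    simpa using Finset.card_image_le (s := Finset.Ico (0 : ℤ) t) (f := z)
  obtain ⟨s, hs, hcard⟩ := Finset.exists_subset_card_eq (s := ((Finset.Ico (0 : ℤ) t).image z)ᶜ)
    (n := n) (by rw [Finset.card_compl]; omega)
  refine ⟨s, hcard, fun f hf => ?_⟩
  rintro ⟨i, rfl⟩
  have pos : (0 : ℤ) < t := by have := h.three_le; omega
  exact Finset.mem_compl.1 (hs hf) <| Finset.mem_image.2 ⟨i % t,
    Finset.mem_Ico.2 ⟨Int.emod_nonneg i pos.ne', Int.emod_lt_of_pos i pos⟩,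
    (h.apply_eq_iff _ _).2 (Int.mod_modEq i t)⟩

theorem length_lt_cost (h : IsStuck x z t c) {i : ℤ} (hi : turnAt x z i = 2) : t < c := by
  have ht := h.three_le
  have one_le : ∀ k ∈ Finset.range t, 1 ≤ turnAt x z (i + k) := fun k _ => by
    have := turnAt_eq_one_or_two x z (i + k)
    omega
  have := Finset.sum_lt_sum one_le
    ⟨0, Finset.mem_range.2 (by omega), by rw [Nat.cast_zero, add_zero, hi]; exact one_lt_two⟩
  rw [h.sum_turnAt] at this
  simpa using this

end IsStuck

theorem not_isStuck [Fintype ι] (hc : 4 ≤ c) (hcard : c + 2 ≤ Fintype.card ι) :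
    ¬ IsStuck x z t c := by
  classical
  intro h
  by_cases hz : ∃ i, turnAt x z i = 2
  · obtain ⟨i, hi⟩ := hz
    have := h.length_lt_cost hi
    obtain ⟨s, hs, hout⟩ := h.exists_outsiders (n := 3) (by omega)
    obtain ⟨f, g, k, hfg, hfk, hgk, rfl⟩ := Finset.card_eq_three.1 hs
    have single := h.turnAt_eq_one (hout f (by simp)) (hout g (by simp)) (hout k (by simp))
      hfg hfk hgk i
    omega
  · have all_single : ∀ i, turnAt x z i = 1 := fun i =>
      (turnAt_eq_one_or_two x z i).resolve_right fun hi => hz ⟨i, hi⟩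
    have cost_eq : (t : ℤ) = c := by simpa [all_single] using h.sum_turnAt 0
    obtain ⟨s, hs, hout⟩ := h.exists_outsiders (n := 2) (by omega)
    obtain ⟨f, g, hfg, rfl⟩ := Finset.card_eq_two.1 hs
    exact hz (h.exists_turnAt_eq_two (by omega) (hout f (by simp)) (hout g (by simp)) hfg)

theorem exists_tour_cost_add_two [Fintype ι] (hc : 4 ≤ c) (hcard : c + 2 ≤ Fintype.card ι)
    (h : ∃ l, IsTour l ∧ tourCost x l = c) : ∃ l, IsTour l ∧ tourCost x l = c + 2 := by
  by_contra! hne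
  let lengths := {n | ∃ l : List ι, (IsTour l ∧ tourCost x l = c) ∧ l.length = n}
  have hbdd : BddAbove lengths := ⟨Fintype.card ι, by
    rintro _ ⟨l, ⟨⟨hl, -⟩, -⟩, rfl⟩
    exact hl.length_le_card⟩
  obtain ⟨l, ⟨hl, hlc⟩, hmax⟩ : sSup lengths ∈ lengths :=
    Nat.sSup_mem (h.elim fun l hl => ⟨l.length, l, hl, rfl⟩) hbdd
  have pos : 0 < l.length := by have := hl.2; omega
  exact not_isStuck (x := x) (z := unroll l pos) (t := l.length) hc hcard
    { three_le := hl.2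
      apply_eq_iff := unroll_apply_eq_iff pos hl.1
      sum_turnAt := fun i => (sum_turnAt_unroll pos x (Nat.le_of_succ_le hl.2) i).trans hlc
      tourCost_ne := hne
      length_le := fun l' hl' hl'c => hmax ▸ le_csSup hbdd ⟨l', ⟨hl', hl'c⟩, rfl⟩ }

theorem ne_of_forall_tourCost_ne
    (hx : ∀ l, IsTour l → tourCost x l ≠ 4 ∧ tourCost x l ≠ 6) {a b c d : ι}
    (hn : [a, b, c, d].Nodup) : x a b ≠ x a d := by
  have abc := hx [a, b, c] ⟨hn.sublist (by simp), le_rfl⟩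
  have acd := hx [a, c, d] ⟨hn.sublist (by simp), le_rfl⟩
  have abcd := hx [a, b, c, d] ⟨hn, Nat.le_succ 3⟩
  simp only [tourCost, pathCost, turn, List.take, List.cons_append, List.nil_append] at abc acd abcd
  have at_a := mismatch_triangle (x a d) (x a c) (x a b)
  have at_c := mismatch_triangle (x c b) (x c a) (x c d)
  have := mismatch_eq_zero_or_one (x a c) (x a b)
  have := mismatch_eq_zero_or_one (x a d) (x a c)
  have := mismatch_eq_zero_or_one (x c b) (x c a)
  have := mismatch_eq_zero_or_one (x c a) (x c d)
  have := mismatch_eq_zero_or_one (x c b) (x c d)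
  have := mismatch_eq_zero_or_one (x b a) (x b c)
  have := mismatch_eq_zero_or_one (x d c) (x d a)
  intro heq
  have : mismatch (x a d) (x a b) = 0 := if_pos heq.symm
  omega

theorem exists_tour_cost_four_or_six {a b c d : ι} (hn : [a, b, c, d].Nodup) :
    ∃ l, IsTour l ∧ (tourCost x l = 4 ∨ tourCost x l = 6) := by
  by_contra! hx
  have hbd := ne_of_forall_tourCost_ne hx hn
  have hbc := ne_of_forall_tourCost_ne hx (a := a) (b := b) (c := d) (d := c)
    ((List.Perm.swap d c []).cons b |>.cons a |>.nodup hn)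
  have hcd := ne_of_forall_tourCost_ne hx (a := a) (b := c) (c := b) (d := d)
    ((List.Perm.swap c b [d]).cons a |>.nodup hn)
  revert hbd hbc hcd
  generalize x a b = p, x a c = q, x a d = r
  revert p q r
  decide

theorem exists_tour_cost_eq_card [Fintype ι] (x : ι → ι → Bool) (he : Even (Fintype.card ι))
    (h₆ : 6 ≤ Fintype.card ι) : ∃ l, IsTour l ∧ tourCost x l = Fintype.card ι := by
  have cost_six : ∃ l, IsTour l ∧ tourCost x l = 6 := by
    obtain ⟨e⟩ := Function.Embedding.nonempty_of_card_le (α := Fin 4) (β := ι)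
      (by rw [Fintype.card_fin]; omega)
    obtain ⟨l, hl, cost | cost⟩ := exists_tour_cost_four_or_six (x := x)
      (List.nodup_ofFn.2 e.injective)
    · exact exists_tour_cost_add_two le_rfl (by omega) ⟨l, hl, cost⟩
    · exact ⟨l, hl, cost⟩
  have cost_even : ∀ n ≥ 3, 2 * n ≤ Fintype.card ι →
      ∃ l, IsTour l ∧ tourCost x l = (2 * n : ℕ) := by
    intro n hn
    induction n, hn using Nat.le_induction with
    | base => exact fun _ => cost_six
    | succ n hn ih =>
      intro hcard
      have := exists_tour_cost_add_two (by omega) (by omega) (ih (by omega))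
      exact_mod_cast this
  obtain ⟨n, hn⟩ := he.two_dvd
  rw [hn]
  exact cost_even n (by omega) hn.ge

end Tours

section PortGraph

variable {ι : Type*} (x : ι → ι → Bool)

/-- The graph of the ends `(i, s)` of disjoint edges `i`, in which the end `x i j` of `i` is joined
to the end `x j i` of `j`. -/
def portGraph : SimpleGraph (ι × Bool) where
  Adj p q := p.1 = q.1 ∧ p.2 ≠ q.2 ∨ p.1 ≠ q.1 ∧ p.2 = x p.1 q.1 ∧ q.2 = x q.1 p.1
  symm := ⟨fun _ _ => Or.imp (And.imp Eq.symm Ne.symm) (And.imp Ne.symm And.symm)⟩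
  loopless := ⟨fun _ => Or.rec (fun h => h.2 rfl) fun h => h.1 rfl⟩

/-- The ends of `v` on a route that enters `v` from `u` and leaves it for `w`. -/
def ports (u v w : ι) : List (ι × Bool) :=
  if x v u = x v w then [(v, x v u)] else [(v, x v u), (v, x v w)]

theorem length_ports (u v w : ι) : ((ports x u v w).length : ℤ) = turn x u v w := by
  unfold ports turn mismatch
  split_ifs <;> rfl

theorem nodup_ports (u v w : ι) : (ports x u v w).Nodup := by
  unfold ports
  split_ifs with hx
  · exact List.nodup_singleton _
  · simpa using hx

theorem fst_eq_of_mem_ports {u v w : ι} {p : ι × Bool} (hp : p ∈ ports x u v w) : p.1 = v := by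
  unfold ports at hp
  split_ifs at hp <;> aesop

theorem exists_walk_support_ports {u v : ι} (huv : u ≠ v) (w : ι) :
    ∃ p : (portGraph x).Walk (u, x u v) (v, x v w), p.support = (u, x u v) :: ports x u v w := by
  have link : (portGraph x).Adj (u, x u v) (v, x v u) := .inr ⟨huv, rfl, rfl⟩
  unfold ports
  split_ifs with hx
  · exact ⟨(link.toWalk).copy rfl (by rw [hx]), by simp⟩
  · have edge : (portGraph x).Adj (v, x v u) (v, x v w) := .inl ⟨rfl, hx⟩
    exact ⟨.cons link edge.toWalk, by simp⟩

/-- The vertices on the route through a list of matching edges, where those of the first and the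
last edge are omitted. -/
def pathVertices : List ι → List (ι × Bool)
  | u :: v :: w :: l => ports x u v w ++ pathVertices (v :: w :: l)
  | _ => []

theorem length_pathVertices (l : List ι) : ((pathVertices x l).length : ℤ) = pathCost x l := by
  fun_induction pathVertices x l with
  | case1 u v w l ih => rw [pathCost, List.length_append, Nat.cast_add, length_ports, ih]
  | case2 l h => rw [pathCost]; exacts [rfl, h]

theorem pathVertices_cons (u : ι) (A : List ι) (v q r : ι) :
    pathVertices x (u :: v :: (A ++ [q, r])) =
      ports x u v (A.headD q) ++ pathVertices x (v :: (A ++ [q, r])) := by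
  cases A <;> rfl

theorem fst_mem_of_mem_pathVertices {u q r : ι} {A : List ι} {p : ι × Bool}
    (hp : p ∈ pathVertices x (u :: (A ++ [q, r]))) : p.1 ∈ A ++ [q] := by
  induction A generalizing u with
  | nil =>
    rw [List.nil_append, pathVertices, pathVertices, List.append_nil] at hp
    · exact List.mem_singleton.2 (fst_eq_of_mem_ports x hp)
    · simp
  | cons v A ih =>
    rw [List.cons_append, pathVertices_cons, List.mem_append] at hp
    exact hp.elim (fun h => fst_eq_of_mem_ports x h ▸ List.mem_cons_self)
      fun h => List.mem_cons_of_mem _ (ih h)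

theorem nodup_pathVertices {u q r : ι} {A : List ι} (hn : (A ++ [q]).Nodup) :
    (pathVertices x (u :: (A ++ [q, r]))).Nodup := by
  induction A generalizing u with
  | nil =>
    rw [List.nil_append, pathVertices, pathVertices, List.append_nil]
    · exact nodup_ports x _ _ _
    · simp
  | cons v A ih =>
    obtain ⟨hv, hn⟩ := List.nodup_cons.1 hn
    rw [List.cons_append, pathVertices_cons]
    refine (nodup_ports x _ _ _).append (ih hn) fun p hp hp' => hv ?_
    rw [← fst_eq_of_mem_ports x hp]
    exact fst_mem_of_mem_pathVertices x hp'

theorem exists_walk_support_pathVertices {u q : ι} {A : List ι} (hu : u ≠ A.headD q)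
    (hn : (A ++ [q]).Nodup) (r : ι) :
    ∃ p : (portGraph x).Walk (u, x u (A.headD q)) (q, x q r),
      p.support = (u, x u (A.headD q)) :: pathVertices x (u :: (A ++ [q, r])) := by
  induction A generalizing u with
  | nil =>
    obtain ⟨p, hp⟩ := exists_walk_support_ports x hu r
    refine ⟨p, hp.trans ?_⟩
    simp [pathVertices]
  | cons v A ih =>
    obtain ⟨hv, hn⟩ := List.nodup_cons.1 hn
    obtain ⟨p₁, hp₁⟩ := exists_walk_support_ports x (v := v) hu (A.headD q)
    obtain ⟨p₂, hp₂⟩ := ih (u := v) (by rintro rfl; cases A <;> simp at hv) hn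
    have support_eq : (p₁.append p₂).support =
        (u, x u v) :: pathVertices x (u :: v :: (A ++ [q, r])) := by
      rw [SimpleGraph.Walk.support_append, hp₁, hp₂, pathVertices_cons, List.cons_append,
        List.tail_cons]
    exact ⟨p₁.append p₂, support_eq⟩

theorem length_le_pathCost_add_two (l : List ι) : l.length ≤ pathCost x l + 2 := by
  fun_induction pathCost x l with
  | case1 u v w l ih =>
    have := turn_eq_one_or_two x u v w
    simp only [List.length_cons] at ih ⊢
    push_cast at ih ⊢
    omega
  | case2 l h =>
    match l, h with
    | [], _ => simp
    | [a], _ => simp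
    | [a, b], _ => simp
    | a :: b :: c :: l, h => exact (h a b c l rfl).elim

theorem exists_isCycle_length_eq_tourCost {l : List ι} (hl : IsTour l) :
    ∃ (v : ι × Bool) (p : (portGraph x).Walk v v), p.IsCycle ∧ p.length = tourCost x l := by
  obtain ⟨hn, h₃⟩ := hl
  match l, hn, h₃ with
  | a :: b :: l, hn, h₃ =>
    have hn' : (b :: l ++ [a]).Nodup := (List.perm_append_singleton a (b :: l)).nodup_iff.2 hn
    obtain ⟨p, hp⟩ : ∃ p : (portGraph x).Walk (a, x a b) (a, x a b),
        p.support = (a, x a b) :: pathVertices x (a :: (b :: l ++ [a, b])) :=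
      exists_walk_support_pathVertices x (List.ne_of_not_mem_cons (List.nodup_cons.1 hn).1) hn' b
    have length_eq : (p.length : ℤ) = tourCost x (a :: b :: l) := by
      have support_length := congrArg List.length hp
      rw [SimpleGraph.Walk.length_support, List.length_cons, add_left_inj] at support_length
      rw [support_length, length_pathVertices]
      rfl
    have three_le : 3 ≤ p.length := by
      have cost_ge : ((a :: b :: l ++ [a, b]).length : ℤ) ≤ tourCost x (a :: b :: l) + 2 :=
        length_le_pathCost_add_two x _
      simp only [List.length_append, List.length_cons, List.length_nil] at cost_ge h₃
      omega
    have not_nil : ¬ p.Nil := fun h => by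
      rw [← SimpleGraph.Walk.length_eq_zero_iff] at h; omega
    refine ⟨_, p, ?_, length_eq⟩
    rw [SimpleGraph.Walk.isCycle_iff_isPath_tail_and_le_length, SimpleGraph.Walk.isPath_def,
      SimpleGraph.Walk.support_tail_of_not_nil _ not_nil, hp, List.tail_cons]
    exact ⟨nodup_pathVertices x hn', three_le⟩

end PortGraph

section Embedding

variable {V : Type*} {G : SimpleGraph V}

theorem exists_choice_of_symmetric {ι α : Type*} [Nonempty α] {r : ι → α → ι → α → Prop}
    (symm : ∀ {i s j t}, r i s j t → r j t i s) (h : ∀ i j, i ≠ j → ∃ s t, r i s j t) :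
    ∃ x : ι → ι → α, ∀ i j, i ≠ j → r i (x i j) j (x j i) := by
  classical
  obtain ⟨_, -⟩ := exists_wellFoundedLT ι
  choose! s t hst using h
  refine ⟨fun i j => if i < j then s i j else t j i, fun i j hij => ?_⟩
  rcases hij.lt_or_gt with h | h
  · simpa only [if_pos h, if_neg h.not_gt] using hst i j hij
  · simpa only [if_pos h, if_neg h.not_gt] using symm (hst j i hij.symm)

theorem exists_adj_coe_eq_range {e : Sym2 V} (he : e ∈ G.edgeSet) :
    ∃ ends : Bool → V, (e : Set V) = Set.range ends ∧ ∀ s t, s ≠ t → G.Adj (ends s) (ends t) := by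
  induction e with
  | _ a b =>
    refine ⟨fun s => bif s then a else b, ?_, ?_⟩
    · ext v
      simp [or_comm, eq_comm]
    · rw [SimpleGraph.mem_edgeSet] at he
      simpa using ⟨he.symm, he⟩

theorem IsStrongClique.mono {S T : Set (Sym2 V)} (hT : IsStrongClique G T) (hST : S ⊆ T) :
    IsStrongClique G S :=
  ⟨hST.trans hT.1, fun e he f hf => hT.2 e (hST he) f (hST hf)⟩

theorem IsStrongClique.exists_injective_hom {M : Set (Sym2 V)} (hM : IsStrongClique G M)
    (hd : M.PairwiseDisjoint ((↑) : Sym2 V → Set V)) :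
    ∃ (x : M → M → Bool) (f : portGraph x →g G), Function.Injective f := by
  choose ends range_ends adj_ends using fun e : M => exists_adj_coe_eq_range (hM.1 e.2)
  have mem_ends (e : M) (s : Bool) : ends e s ∈ (e : Sym2 V) :=
    (range_ends e).ge (Set.mem_range_self s)
  have eq_of_ends_eq {e f : M} {s t : Bool} (h : ends e s = ends f t) : e = f :=
    Subtype.ext (hd.elim_set e.2 f.2 _ (mem_ends e s) (h ▸ mem_ends f t))
  have exists_link (e f : M) (hef : e ≠ f) : ∃ s t, G.Adj (ends e s) (ends f t) := by
    obtain ⟨a, b, ha, hb, hab⟩ := hM.2 e e.2 f f.2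
    obtain ⟨s, rfl⟩ := (range_ends e).le ha
    obtain ⟨t, rfl⟩ := (range_ends f).le hb
    exact ⟨s, t, hab.resolve_left fun h => hef (eq_of_ends_eq h)⟩
  obtain ⟨x, hx⟩ := exists_choice_of_symmetric
    (r := fun e s f t => G.Adj (ends e s) (ends f t)) SimpleGraph.Adj.symm exists_link
  refine ⟨x, ⟨fun p => ends p.1 p.2, ?_⟩, ?_⟩
  · rintro ⟨e, s⟩ ⟨f, t⟩ (⟨rfl, hst⟩ | ⟨hef, hs, ht⟩)
    · exact adj_ends e s t hst
    · obtain rfl : s = x e f := hs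
      obtain rfl : t = x f e := ht
      exact hx e f hef
  · rintro ⟨e, s⟩ ⟨f, t⟩ (h : ends e s = ends f t)
    obtain rfl := eq_of_ends_eq h
    exact Prod.ext rfl (by_contra fun hst => (adj_ends e s t hst).ne h)

theorem IsStrongClique.exists_isCycle_length_eq_card {M : Finset (Sym2 V)}
    (hM : IsStrongClique G M) (hd : (M : Set (Sym2 V)).PairwiseDisjoint ((↑) : Sym2 V → Set V))
    (he : Even M.card) (h₆ : 6 ≤ M.card) :
    ∃ (v : V) (p : G.Walk v v), p.IsCycle ∧ p.length = M.card := by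
  obtain ⟨x, f, hf⟩ := hM.exists_injective_hom hd
  rw [← Fintype.card_coe] at he h₆ ⊢
  obtain ⟨l, hl, cost_eq⟩ := exists_tour_cost_eq_card x he h₆
  obtain ⟨v, p, hp, length_eq⟩ := exists_isCycle_length_eq_tourCost x hl
  refine ⟨f v, p.map f, hp.map hf, ?_⟩
  rw [SimpleGraph.Walk.length_map]
  exact Int.ofNat_inj.1 (length_eq.trans cost_eq)

theorem IsStrongClique.card_lt_of_cycleFree {M : Finset (Sym2 V)} {k : ℕ}
    (hM : IsStrongClique G M) (hd : (M : Set (Sym2 V)).PairwiseDisjoint ((↑) : Sym2 V → Set V))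
    (hk : 3 ≤ k) (hG : CycleFree G (2 * k)) : M.card < 2 * k := by
  by_contra! two_mul_le
  obtain ⟨N, hNM, hN⟩ := Finset.exists_subset_card_eq two_mul_le
  have hNM' : (N : Set (Sym2 V)) ⊆ M := Finset.coe_subset.2 hNM
  obtain ⟨v, p, hp, length_eq⟩ := (hM.mono hNM').exists_isCycle_length_eq_card (hd.subset hNM')
    (hN ▸ even_two_mul k) (by omega)
  exact hG v p hp (length_eq.trans hN)

end Embedding

section Matching

variable {V : Type*} {S M : Finset (Sym2 V)} {e : Sym2 V} {v : V}

/-- The vertices that are not covered by the edges of `M`. -/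
def exposed (M : Finset (Sym2 V)) : Set V := {v | ∀ e ∈ M, v ∉ e}

/-- A matching in the edge set `S`, as a set of pairwise disjoint edges. -/
structure IsMatchingIn (S M : Finset (Sym2 V)) : Prop where
  subset : M ⊆ S
  disjoint : (M : Set (Sym2 V)).PairwiseDisjoint ((↑) : Sym2 V → Set V)

/-- A matching in `S` with the largest possible number of edges. -/
structure IsMaximumMatchingIn (S M : Finset (Sym2 V)) : Prop extends IsMatchingIn S M where
  card_le : ∀ N, IsMatchingIn S N → N.card ≤ M.card

theorem exists_isMaximumMatchingIn (S : Finset (Sym2 V)) : ∃ M, IsMaximumMatchingIn S M := by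
  classical
  obtain ⟨M, hM, card_le⟩ := (S.powerset.filter (IsMatchingIn S)).exists_max_image Finset.card
    ⟨∅, by simpa using ⟨Finset.empty_subset S, by simp⟩⟩
  refine ⟨M, (Finset.mem_filter.1 hM).2, fun N hN => card_le N ?_⟩
  exact Finset.mem_filter.2 ⟨Finset.mem_powerset.2 hN.subset, hN⟩

theorem notMem_of_forall_mem_exposed (he : ∀ v ∈ e, v ∈ exposed M) : e ∉ M :=
  fun h => he _ e.out_fst_mem e h e.out_fst_mem

section Insert

variable [DecidableEq V]

theorem mem_exposed_insert : v ∈ exposed (insert e M) ↔ v ∉ e ∧ v ∈ exposed M := by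
  simp [exposed]

theorem mem_exposed_erase (hv : v ∈ exposed M) : v ∈ exposed (M.erase e) :=
  fun f hf => hv f (Finset.mem_of_mem_erase hf)

namespace IsMatchingIn

theorem mem_exposed_erase_of_mem (hM : IsMatchingIn S M) (he : e ∈ M) (hv : v ∈ e) :
    v ∈ exposed (M.erase e) := fun _ hf hvf =>
  (Finset.mem_erase.1 hf).1 (hM.disjoint.elim_set (Finset.mem_of_mem_erase hf) he v hvf hv)

theorem erase (hM : IsMatchingIn S M) (e : Sym2 V) : IsMatchingIn S (M.erase e) :=
  ⟨(M.erase_subset e).trans hM.subset, hM.disjoint.subset (Finset.coe_subset.2 (M.erase_subset e))⟩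

theorem insert (hM : IsMatchingIn S M) (he : e ∈ S) (hv : ∀ v ∈ e, v ∈ exposed M) :
    IsMatchingIn S (insert e M) where
  subset := Finset.insert_subset he hM.subset
  disjoint := by
    rw [Finset.coe_insert]
    exact hM.disjoint.insert fun f hf _ => Set.disjoint_left.2 fun v hve => hv v hve f hf

end IsMatchingIn

end Insert

namespace IsMaximumMatchingIn

theorem exists_mem_notMem_exposed (hM : IsMaximumMatchingIn S M) (he : e ∈ S) :
    ∃ v ∈ e, v ∉ exposed M := by
  classical
  by_contra! hv
  have := hM.card_le _ (hM.insert he hv)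
  rw [Finset.card_insert_of_notMem (notMem_of_forall_mem_exposed hv)] at this
  omega

-- Otherwise `y a b y'` is an augmenting path.
theorem eq_of_exposed_neighbors (hM : IsMaximumMatchingIn S M) {a b y y' : V} (hab : a ≠ b)
    (he : s(a, b) ∈ M) (hy : y ∈ exposed M) (hay : s(a, y) ∈ S) (hy' : y' ∈ exposed M)
    (hby' : s(b, y') ∈ S) : y = y' := by
  classical
  by_contra hne
  have covered {v : V} (hv : v ∈ s(a, b)) := hM.mem_exposed_erase_of_mem he hv
  have right_exposed : ∀ v ∈ s(b, y'), v ∈ exposed (M.erase s(a, b)) :=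
    Sym2.ball.2 ⟨covered (Sym2.mem_mk_right a b), mem_exposed_erase hy'⟩
  have left_exposed : ∀ v ∈ s(a, y), v ∈ exposed (insert s(b, y') (M.erase s(a, b))) := by
    have y_notMem := hy _ he
    have y'_notMem := hy' _ he
    refine Sym2.ball.2 ⟨mem_exposed_insert.2 ⟨?_, covered (Sym2.mem_mk_left a b)⟩,
      mem_exposed_insert.2 ⟨?_, mem_exposed_erase hy⟩⟩ <;> grind
  have := hM.card_le _ (((hM.erase s(a, b)).insert hby' right_exposed).insert hay left_exposed)
  rw [Finset.card_insert_of_notMem (notMem_of_forall_mem_exposed left_exposed),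
    Finset.card_insert_of_notMem (notMem_of_forall_mem_exposed right_exposed),
    Finset.card_erase_add_one he] at this
  omega

theorem exists_eq_mk_forall_exposed_eq (hM : IsMaximumMatchingIn S M) (he : e ∈ M)
    (hdiag : ¬ e.IsDiag) :
    ∃ a b c, e = s(a, b) ∧ ∀ y ∈ exposed M, s(b, y) ∈ S → y = c := by
  induction e with
  | _ a b =>
    by_cases ha : ∃ c ∈ exposed M, s(a, c) ∈ S
    · obtain ⟨c, hc, hac⟩ := ha
      exact ⟨a, b, c, rfl, fun y hy hby =>
        (hM.eq_of_exposed_neighbors (by simpa using hdiag) he hc hac hy hby).symm⟩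
    · push Not at ha
      exact ⟨b, a, a, Sym2.eq_swap, fun y hy hay => (ha y hy hay).elim⟩

theorem exists_mem_or_eq_mk (hM : IsMaximumMatchingIn S M) {a b c : M → V}
    (mk_eq : ∀ e : M, (e : Sym2 V) = s(a e, b e))
    (eq_c : ∀ e, ∀ y ∈ exposed M, s(b e, y) ∈ S → y = c e) (he : e ∈ S) (hdiag : ¬ e.IsDiag) :
    (∃ f, a f ∈ e) ∨ (∃ f, e = s(b f, c f)) ∨ ∃ f g, f ≠ g ∧ e = s(b f, b g) := by
  have eq_a_or_eq_b {v : V} (hv : v ∉ exposed M) : ∃ f : M, v = a f ∨ v = b f := by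
    simp only [exposed, Set.mem_ofPred_eq, not_forall, not_not] at hv
    obtain ⟨f, hf, hv⟩ := hv
    exact ⟨⟨f, hf⟩, Sym2.mem_iff.1 (mk_eq ⟨f, hf⟩ ▸ hv)⟩
  obtain ⟨u, hu, u_covered⟩ := hM.exists_mem_notMem_exposed he
  obtain ⟨v, rfl⟩ := Sym2.mem_iff_exists.1 hu
  obtain ⟨f, rfl | rfl⟩ := eq_a_or_eq_b u_covered
  · exact .inl ⟨f, Sym2.mem_mk_left _ _⟩
  by_cases hv : v ∈ exposed M
  · exact .inr (.inl ⟨f, by rw [eq_c f v hv he]⟩)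
  obtain ⟨g, rfl | rfl⟩ := eq_a_or_eq_b hv
  · exact .inl ⟨g, Sym2.mem_mk_right _ _⟩
  · exact .inr (.inr ⟨f, g, fun h => hdiag (congrArg b h), rfl⟩)

theorem card_le_card_mul_maxDegree_add [Fintype V] {G : SimpleGraph V} [DecidableRel G.Adj]
    (hM : IsMaximumMatchingIn S M) (hS : (S : Set (Sym2 V)) ⊆ G.edgeSet) :
    S.card ≤ M.card * G.maxDegree + M.card * M.card := by
  classical
  have not_isDiag {e : Sym2 V} (he : e ∈ S) : ¬ e.IsDiag := G.not_isDiag_of_mem_edgeSet (hS he)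
  choose a b c mk_eq eq_c using fun e : M =>
    hM.exists_eq_mk_forall_exposed_eq e.2 (not_isDiag (hM.subset e.2))
  let A := Finset.univ.biUnion fun f => G.incidenceFinset (a f)
  let B := Finset.univ.image fun p : M × M => s(b p.1, if p.1 = p.2 then c p.1 else b p.2)
  have card_A : A.card ≤ M.card * G.maxDegree := by
    rw [← Fintype.card_coe M]
    refine Finset.card_biUnion_le_card_mul _ _ _ fun f _ => ?_
    exact (G.card_incidenceFinset_eq_degree _).trans_le (G.degree_le_maxDegree _)
  have card_B : B.card ≤ M.card * M.card := by
    refine Finset.card_image_le.trans_eq ?_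
    rw [Finset.card_univ, Fintype.card_prod, Fintype.card_coe]
  have subset : S ⊆ A ∪ B := by
    intro e he
    rcases hM.exists_mem_or_eq_mk mk_eq eq_c he (not_isDiag he) with
      ⟨f, hf⟩ | ⟨f, rfl⟩ | ⟨f, g, hfg, rfl⟩
    · exact Finset.mem_union_left _ (Finset.mem_biUnion.2
        ⟨f, Finset.mem_univ f, (G.mem_incidenceFinset _ _).2 ⟨hS he, hf⟩⟩)
    · exact Finset.mem_union_right _ (Finset.mem_image.2
        ⟨(f, f), Finset.mem_univ _, by rw [if_pos rfl]⟩)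
    · exact Finset.mem_union_right _ (Finset.mem_image.2
        ⟨(f, g), Finset.mem_univ _, by rw [if_neg hfg]⟩)
  calc S.card ≤ (A ∪ B).card := Finset.card_le_card subset
    _ ≤ A.card + B.card := Finset.card_union_le A B
    _ ≤ M.card * G.maxDegree + M.card * M.card := add_le_add card_A card_B

end IsMaximumMatchingIn

end Matching

/-- For `k ≥ 3`, if `G` is a `C₂ₖ`-free graph with `Δ(G) ≥ 1`, then the strong clique
number of `G` is at most `(2k - 1)Δ(G) + (2k - 1)²`. -/
theorem stmt18 {V : Type*} [Fintype V] [DecidableEq V] (G : SimpleGraph V)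
    [DecidableRel G.Adj] (k : ℕ) (hk : 3 ≤ k)
    (hc2k : CycleFree G (2 * k)) (hΔ : 1 ≤ G.maxDegree)
    (S : Finset (Sym2 V)) (hS : IsStrongClique G ↑S) :
    (S.card : ℤ) ≤ (2 * k - 1) * G.maxDegree + (2 * k - 1) ^ 2 := by
  obtain ⟨M, hM⟩ := exists_isMaximumMatchingIn S
  have card_lt : M.card < 2 * k :=
    (hS.mono (Finset.coe_subset.2 hM.subset)).card_lt_of_cycleFree hM.disjoint hk hc2k
  have card_le : (M.card : ℤ) ≤ 2 * k - 1 := by omega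
  calc (S.card : ℤ) ≤ M.card * G.maxDegree + M.card ^ 2 := by
        rw [sq]; exact_mod_cast hM.card_le_card_mul_maxDegree_add hS.1
    _ ≤ (2 * k - 1) * G.maxDegree + (2 * k - 1) ^ 2 := by gcongr
end
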